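/- arXiv:2202.03667 — 3 statements merged into one kernel-verified Lean document; each statement's English description precedes it below -/
import Mathlib

section
/- Let 0 < p < ∞ and let w be a positive integrable super-biharmonic weight function on the unit disk 𝔻 (i.e., w is C⁴ and Δ²w(z) ≥ 0 on 𝔻, where Δ = (1/4)(∂²/∂x² + ∂²/∂y²)) satisfying lim_{r→1} ∫_𝕋 w(rζ) dσ(ζ) = 0, where dσ is the normalized arc-length measure on the unit circle 𝕋 = ∂𝔻. Then the analytic polynomials are dense in the weighted Bergman space A^p(𝔻, w dA). -/
/-!
The dilates `f_r(z) = f(r z)` are approximated uniformly by their Taylor polynomials, so it suffices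
that `f_r → f` in the weighted norm for suitable `r → 1`. This follows by dominated convergence
once all `‖f_r‖ ^ p` are bounded by one function that is integrable against `w`.

The dominating function is a multiple of `∫ ‖f b‖ ^ p * kern b u dA(b)`, where
`kern b u = (1 - |b|²)⁴ / |1 - b̄ u|⁶`. It dominates the dilates at `u` because `‖f‖ ^ p` has the
sub-mean value property and `kern b u` is comparable to `(1 - r |u|)⁻²` for `b` in the disc of
radius `(1 - r |u|) / 2` about `r u` (`dilate_le`; only the lower bound for the kernel matters). By
Tonelli's theorem, its integral against `w` is finite as soon as `∫ kern b u * w u dA(u) ≤ 2π w b`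
for all `b` (`lintegral_kern_le`).

This estimate is where the hypotheses on `w` enter. Let `φ z = (z + b) / (1 + b̄ z)`. The
transplanted weight `|1 + b̄ z|² w(φ z)` is again super-biharmonic, and its integral over the disc
is the left-hand side of the estimate (`lintegral_transplant`). For a super-biharmonic function the
circle integrals of the Laplacian increase with the radius `r`, so by the divergence theorem the
circle integrals of the function itself are convex in `r²` (`convexOn_transplant`). They come
arbitrarily close to `0` as `r → 1`: otherwise the integrals of the transplanted weight over thin
annuli at the boundary would be too large compared with those of `w`
(`exists_ringInt_transplant_le`). Hence they are bounded by their value `2π w(b)` at `r = 0`, and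
integration in polar coordinates gives the estimate.
-/

open MeasureTheory Metric Filter
open scoped Topology Real

/-- The laplacian `Δ = (1/4)(∂²/∂x² + ∂²/∂y²)` of a function `u : ℂ → ℝ`, expressed via the
second iterated Fréchet derivative in the directions `1` and `I`. -/
noncomputable def quarterLaplacian (u : ℂ → ℝ) (z : ℂ) : ℝ :=
  (1 / 4) * (iteratedFDeriv ℝ 2 u z ![1, 1] +
    iteratedFDeriv ℝ 2 u z ![Complex.I, Complex.I])

/-! ### Calculus of the Laplacian -/

/-- The standard Laplacian `∂²/∂x² + ∂²/∂y²`, written with the second Fréchet derivative. -/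
noncomputable def lap (F : ℂ → ℝ) (z : ℂ) : ℝ :=
  fderiv ℝ (fderiv ℝ F) z 1 1 + fderiv ℝ (fderiv ℝ F) z Complex.I Complex.I

lemma quarterLaplacian_eq_lap (F : ℂ → ℝ) : quarterLaplacian F = fun z => (1 / 4) * lap F z := by
  funext z
  simp [quarterLaplacian, lap, iteratedFDeriv_two_apply]

lemma lap_const_mul (c : ℝ) {F : ℂ → ℝ} {z : ℂ} (hF : ContDiffAt ℝ 2 F z) :
    lap (fun y => c * F y) z = c * lap F z := by
  have h1 : fderiv ℝ (fun y => c * F y) =ᶠ[𝓝 z] fun y => c • fderiv ℝ F y := by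
    filter_upwards [hF.eventually (by simp)] with y hy
    exact fderiv_const_mul (hy.differentiableAt (by norm_num)) c
  have h2 : DifferentiableAt ℝ (fderiv ℝ F) z :=
    (hF.fderiv_right (m := 1) (by norm_num)).differentiableAt (by norm_num)
  unfold lap
  rw [h1.fderiv_eq, fderiv_fun_const_smul h2 c]
  simp [mul_add]

/-- The trace of a symmetric real bilinear form on `ℂ`, computed in the orthogonal frame
`h, i h`. -/
lemma bilin_trace (B : ℂ →L[ℝ] ℂ →L[ℝ] ℝ) (hB : B 1 Complex.I = B Complex.I 1) (h : ℂ) :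
    B h h + B (Complex.I * h) (Complex.I * h)
      = ‖h‖ ^ 2 * (B 1 1 + B Complex.I Complex.I) := by
  have e1 : h = h.re • (1 : ℂ) + h.im • Complex.I := by
    apply Complex.ext <;> simp
  have e2 : Complex.I * h = (-h.im) • (1 : ℂ) + h.re • Complex.I := by
    apply Complex.ext <;> simp
  have e3 : ‖h‖ ^ 2 = h.re ^ 2 + h.im ^ 2 := by
    rw [← Complex.normSq_eq_norm_sq, Complex.normSq_apply]; ring
  rw [e2, e3]
  generalize h.re = x at *
  generalize h.im = y at *
  rw [e1]
  simp only [map_add, map_smul, add_apply, smul_apply, smul_eq_mul]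
  rw [hB]; ring

lemma snd_symm {E : Type*} [NormedAddCommGroup E] [NormedSpace ℝ E]
    {F : ℂ → E} {z : ℂ} (hF : ContDiffAt ℝ 2 F z) (h k : ℂ) :
    fderiv ℝ (fderiv ℝ F) z h k = fderiv ℝ (fderiv ℝ F) z k h :=
  (hF.isSymmSndFDerivAt (by simp)).eq h k

lemma differentiableAt_fderiv {E : Type*} [NormedAddCommGroup E] [NormedSpace ℝ E]
    {F : ℂ → E} {z : ℂ} (hF : ContDiffAt ℝ 2 F z) : DifferentiableAt ℝ (fderiv ℝ F) z :=
  (hF.fderiv_right (m := 1) (by norm_num)).differentiableAt (by norm_num)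

lemma snd_apply {E : Type*} [NormedAddCommGroup E] [NormedSpace ℝ E]
    {F : ℂ → E} {z : ℂ} (hF : ContDiffAt ℝ 2 F z) (h k : ℂ) :
    fderiv ℝ (fderiv ℝ F) z h k = fderiv ℝ (fun y => fderiv ℝ F y k) z h := by
  have := (differentiableAt_fderiv hF).hasFDerivAt.clm_apply (hasFDerivAt_const k z)
  rw [this.fderiv]; simp

lemma contDiffAt_lap {F : ℂ → ℝ} {z : ℂ} {m n : WithTop ℕ∞} (hF : ContDiffAt ℝ n F z)
    (hmn : m + 1 + 1 ≤ n) : ContDiffAt ℝ m (lap F) z := by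
  have h1 : ContDiffAt ℝ m (fderiv ℝ (fderiv ℝ F)) z := (hF.fderiv_right hmn).fderiv_right le_rfl
  exact ((h1.clm_apply contDiffAt_const).clm_apply contDiffAt_const).add
    ((h1.clm_apply contDiffAt_const).clm_apply contDiffAt_const)

lemma lap_congr {F G : ℂ → ℝ} {z : ℂ} (h : F =ᶠ[𝓝 z] G) : lap F z = lap G z := by
  unfold lap
  rw [(h.fderiv (𝕜 := ℝ)).fderiv_eq]

lemma lap_add {F G : ℂ → ℝ} {z : ℂ} (hF : ContDiffAt ℝ 2 F z) (hG : ContDiffAt ℝ 2 G z) :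
    lap (fun y => F y + G y) z = lap F z + lap G z := by
  have h1 : fderiv ℝ (fun y => F y + G y) =ᶠ[𝓝 z] fun y => fderiv ℝ F y + fderiv ℝ G y := by
    filter_upwards [hF.eventually (by simp), hG.eventually (by simp)] with y hy hy'
    exact fderiv_fun_add (hy.differentiableAt (by norm_num)) (hy'.differentiableAt (by norm_num))
  unfold lap
  rw [h1.fderiv_eq, fderiv_fun_add (differentiableAt_fderiv hF) (differentiableAt_fderiv hG)]
  simp; ring

/-- The Leibniz rule for the Laplacian. -/
lemma lap_mul {F G : ℂ → ℝ} {z : ℂ} (hF : ContDiffAt ℝ 2 F z) (hG : ContDiffAt ℝ 2 G z) :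
    lap (fun y => F y * G y) z = F z * lap G z + G z * lap F z
      + 2 * (fderiv ℝ F z 1 * fderiv ℝ G z 1
        + fderiv ℝ F z Complex.I * fderiv ℝ G z Complex.I) := by
  have h1 : fderiv ℝ (fun y => F y * G y)
      =ᶠ[𝓝 z] fun y => F y • fderiv ℝ G y + G y • fderiv ℝ F y := by
    filter_upwards [hF.eventually (by simp), hG.eventually (by simp)] with y hy hy'
    exact fderiv_fun_mul (hy.differentiableAt (by norm_num)) (hy'.differentiableAt (by norm_num))
  have dF := (hF.differentiableAt (by norm_num)).hasFDerivAt
  have dG := (hG.differentiableAt (by norm_num)).hasFDerivAt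
  have h2 := (dF.smul (differentiableAt_fderiv hG).hasFDerivAt).add
    (dG.smul (differentiableAt_fderiv hF).hasFDerivAt)
  unfold lap
  erw [h1.fderiv_eq, HasFDerivAt.fderiv h2]
  simp; ring

/-- The Laplacian of `F ∘ φ` for holomorphic `φ` is `|φ'|² (ΔF) ∘ φ`. -/
lemma lap_comp {F : ℂ → ℝ} {φ φ' : ℂ → ℂ} {φ'' : ℂ} {z : ℂ} (hF : ContDiffAt ℝ 2 F (φ z))
    (hφ : ∀ᶠ y in 𝓝 z, HasDerivAt φ (φ' y) y) (hφ' : HasDerivAt φ' φ'' z) :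
    lap (fun y => F (φ y)) z = ‖φ' z‖ ^ 2 * lap F (φ z) := by
  have hc : ContinuousAt φ z := hφ.self_of_nhds.continuousAt
  have key : ∀ k : ℂ, (fun y => fderiv ℝ (fun y => F (φ y)) y k)
      =ᶠ[𝓝 z] fun y => fderiv ℝ F (φ y) (φ' y * k) := by
    intro k
    filter_upwards [hφ, hc.eventually (hF.eventually (by simp))] with y h1 h2
    have := (h2.differentiableAt (by norm_num)).hasFDerivAt.comp y
      (h1.hasFDerivAt.restrictScalars ℝ)
    rw [show (fun y => F (φ y)) = F ∘ φ from rfl, this.fderiv]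
    simp [mul_comm]
  have hC2 : ContDiffAt ℝ 2 (fun y => F (φ y)) z := by
    refine hF.comp z ?_
    have : AnalyticAt ℂ φ z := by
      rw [Complex.analyticAt_iff_eventually_differentiableAt]
      exact hφ.mono fun y hy => hy.differentiableAt
    exact (this.contDiffAt (n := 2)).restrict_scalars ℝ
  have d2 : ∀ k : ℂ, fderiv ℝ (fderiv ℝ (fun y => F (φ y))) z k k
      = fderiv ℝ (fderiv ℝ F) (φ z) (φ' z * k) (φ' z * k) + fderiv ℝ F (φ z) (φ'' * k * k) := by
    intro k
    rw [snd_apply hC2, (key k).fderiv_eq]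
    have e1 := ((differentiableAt_fderiv hF).hasFDerivAt.comp z
      (hφ.self_of_nhds.hasFDerivAt.restrictScalars ℝ))
    have e2 := (hφ'.mul_const k).hasFDerivAt.restrictScalars ℝ
    have e3 := e1.clm_apply e2
    erw [e3.fderiv]
    simp [mul_comm, mul_left_comm]
    ring
  have hs := snd_symm hF
  unfold lap
  rw [d2, d2, ← bilin_trace _ (hs _ _)]
  have e5 : φ'' * Complex.I * Complex.I = - (φ'' * 1 * 1) := by
    rw [mul_assoc, Complex.I_mul_I]; ring
  rw [e5, map_neg, mul_one, mul_comm (φ' z) Complex.I]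
  ring

/-! ### Conformal covariance of the bi-Laplacian -/

lemma hasFDerivAt_affine (c z : ℂ) : HasFDerivAt (fun y : ℂ => 1 + c * y)
    (c • ContinuousLinearMap.id ℝ ℂ) z := by
  have := ((hasFDerivAt_id (𝕜 := ℝ) z).const_smul c).const_add 1
  exact this

lemma fderiv_normSq_affine (c z h : ℂ) :
    fderiv ℝ (fun y : ℂ => ‖1 + c * y‖ ^ 2) z h
      = 2 * ((starRingEnd ℂ) (1 + c * z) * (c * h)).re := by
  rw [((hasFDerivAt_affine c z).norm_sq).fderiv]
  simp [Complex.inner]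
  ring

lemma contDiff_normSq_affine (c : ℂ) {n : WithTop ℕ∞} :
    ContDiff ℝ n (fun y : ℂ => ‖1 + c * y‖ ^ 2) :=
  ((contDiff_const.add (contDiff_const.mul contDiff_id)).norm_sq ℝ)

lemma lap_normSq_affine (c z : ℂ) :
    lap (fun y : ℂ => ‖1 + c * y‖ ^ 2) z = 4 * ‖c‖ ^ 2 := by
  have h2 : ∀ k : ℂ, fderiv ℝ (fderiv ℝ (fun y : ℂ => ‖1 + c * y‖ ^ 2)) z k k
      = 2 * ‖c * k‖ ^ 2 := by
    intro k
    rw [snd_apply (contDiff_normSq_affine c).contDiffAt]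
    have e : (fun y => fderiv ℝ (fun y : ℂ => ‖1 + c * y‖ ^ 2) y k)
        = fun y => 2 * inner ℝ (1 + c * y) (c * k) := by
      funext y
      rw [fderiv_normSq_affine]
      simp [Complex.inner]; ring
    rw [e]
    have := ((hasFDerivAt_affine c z).inner ℝ (hasFDerivAt_const (c * k) z)).const_mul 2
    rw [this.fderiv]
    simp
  unfold lap
  rw [h2, h2]
  simp; ring

/-- The function whose composition with the disk automorphism `φ z = (z + b) / (1 + b̄ z)` is the
Laplacian of `z ↦ |1 + b̄ z|² w (φ z)`, see `lap_transplant`. -/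
noncomputable def lapTransform (b : ℂ) (w : ℂ → ℝ) (u : ℂ) : ℝ :=
  (‖1 + (-(starRingEnd ℂ) b) * u‖ ^ 2 * lap w u
    + 4 * fderiv ℝ w u (b * (1 - (starRingEnd ℂ) b * u))) + 4 * ‖b‖ ^ 2 * w u

lemma contDiffAt_lapTransform {b : ℂ} {w : ℂ → ℝ} {u : ℂ} (hw : ContDiffAt ℝ 4 w u) :
    ContDiffAt ℝ 2 (lapTransform b w) u := by
  have h1 : ContDiffAt ℝ 2 (lap w) u := contDiffAt_lap hw (by norm_num)
  have h2 : ContDiffAt ℝ 2 (fderiv ℝ w) u := hw.fderiv_right (by norm_num)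
  have h3 : ContDiffAt ℝ 2 w u := hw.of_le (by norm_num)
  refine ((((contDiff_normSq_affine _).contDiffAt).mul h1).add
    (contDiffAt_const.mul (h2.clm_apply ?_))).add (contDiffAt_const.mul h3)
  fun_prop

/-- The Laplacian of `Dw(u)[a(u)]` for the affine field `a(u) = b (1 - b̄ u)`. -/
lemma lap_fderiv_affine {b : ℂ} {w : ℂ → ℝ} {u : ℂ} (hw : ContDiffAt ℝ 4 w u) :
    lap (fun y => fderiv ℝ w y (b * (1 - (starRingEnd ℂ) b * y))) u
      = fderiv ℝ (lap w) u (b * (1 - (starRingEnd ℂ) b * u)) - 2 * ‖b‖ ^ 2 * lap w u := by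
  set a : ℂ → ℂ := fun y => b * (1 - (starRingEnd ℂ) b * y) with ha
  have hda : ∀ y, HasFDerivAt a ((-(‖b‖ ^ 2 : ℝ)) • ContinuousLinearMap.id ℝ ℂ) y := by
    intro y
    have := ((((hasFDerivAt_id (𝕜 := ℝ) y).const_smul ((starRingEnd ℂ) b)).const_sub 1).const_smul b)
    refine HasFDerivAt.congr_fderiv (this : HasFDerivAt a _ y) ?_
    ext h
    simp [← mul_assoc, Complex.mul_conj, Complex.normSq_eq_norm_sq]
  have h1 : ContDiffAt ℝ 3 (fderiv ℝ w) u := hw.fderiv_right (by norm_num)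
  have h2 : ContDiffAt ℝ 2 (fderiv ℝ (fderiv ℝ w)) u := h1.fderiv_right (by norm_num)
  have hT : ContDiffAt ℝ 2 (fun y => fderiv ℝ w y (a y)) u := by
    refine (h1.of_le (by norm_num)).clm_apply ?_
    simp only [ha]; fun_prop
  have key : ∀ k, fderiv ℝ (fderiv ℝ (fun y => fderiv ℝ w y (a y))) u k k
      = fderiv ℝ (fderiv ℝ (fderiv ℝ w)) u (a u) k k
        - 2 * ‖b‖ ^ 2 * fderiv ℝ (fderiv ℝ w) u k k := by
    intro k
    rw [snd_apply hT]
    have e : (fun y => fderiv ℝ (fun y => fderiv ℝ w y (a y)) y k) =ᶠ[𝓝 u]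
        fun y => fderiv ℝ (fderiv ℝ w) y k (a y) + fderiv ℝ w y ((-(‖b‖ ^ 2 : ℝ)) • k) := by
      filter_upwards [h1.eventually (by simp)] with y hy
      have := (hy.differentiableAt (by norm_num)).hasFDerivAt.clm_apply (hda y)
      rw [this.fderiv]
      simp [add_comm, -Complex.real_smul]
    rw [e.fderiv_eq]
    have e1 := ((h2.differentiableAt (by norm_num)).hasFDerivAt.clm_apply
      (hasFDerivAt_const k u)).clm_apply (hda u)
    have e2 := (h1.differentiableAt (by norm_num)).hasFDerivAt.clm_apply
      (hasFDerivAt_const ((-(‖b‖ ^ 2 : ℝ)) • k) u)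
    erw [(e1.add e2).fderiv]
    have s1 : fderiv ℝ (fderiv ℝ (fderiv ℝ w)) u k k (a u)
        = fderiv ℝ (fderiv ℝ (fderiv ℝ w)) u (a u) k k := by
      rw [snd_symm (h1.of_le (by norm_num)) (a u) k]
      have hsy : ∀ x : ℂ, (fun y => fderiv ℝ (fderiv ℝ w) y k x) =ᶠ[𝓝 u]
          fun y => fderiv ℝ (fderiv ℝ w) y x k := by
        intro x
        filter_upwards [hw.eventually (by simp)] with y hy
        exact snd_symm (hy.of_le (by norm_num)) _ _
      have hh : ∀ p q x, fderiv ℝ (fderiv ℝ (fderiv ℝ w)) u x p q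
          = fderiv ℝ (fun y => fderiv ℝ (fderiv ℝ w) y p q) u x := by
        intro p q x
        have := ((h2.differentiableAt (by norm_num)).hasFDerivAt.clm_apply
          (hasFDerivAt_const p u)).clm_apply (hasFDerivAt_const q u)
        rw [this.fderiv]; simp
      rw [hh, hh, (hsy (a u)).fderiv_eq]
    simp [s1, -Complex.real_smul]
    ring
  have hl : fderiv ℝ (lap w) u (a u) = fderiv ℝ (fderiv ℝ (fderiv ℝ w)) u (a u) 1 1
      + fderiv ℝ (fderiv ℝ (fderiv ℝ w)) u (a u) Complex.I Complex.I := by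
    have e1 : ∀ k : ℂ, HasFDerivAt (fun y => fderiv ℝ (fderiv ℝ w) y k k) _ u := fun k =>
      ((h2.differentiableAt (by norm_num)).hasFDerivAt.clm_apply
        (hasFDerivAt_const k u)).clm_apply (hasFDerivAt_const k u)
    have := (e1 1).add (e1 Complex.I)
    erw [this.fderiv]
    simp
  rw [hl]
  unfold lap
  rw [key, key]; ring

/-- The second half of the conformal covariance of the bi-Laplacian: together with `lap_mob` and
`lap_transplant` it gives that transplanted weights are super-biharmonic. -/
lemma lap_lapTransform {b : ℂ} {w : ℂ → ℝ} {u : ℂ} (hw : ContDiffAt ℝ 4 w u) :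
    lap (lapTransform b w) u = ‖1 - (starRingEnd ℂ) b * u‖ ^ 2 * lap (lap w) u := by
  have h1 : ContDiffAt ℝ 2 (lap w) u := contDiffAt_lap hw (by norm_num)
  have h2 : ContDiffAt ℝ 2 (fderiv ℝ w) u := hw.fderiv_right (by norm_num)
  have h3 : ContDiffAt ℝ 2 w u := hw.of_le (by norm_num)
  have hN := (contDiff_normSq_affine (-(starRingEnd ℂ) b) (n := 2)).contDiffAt (x := u)
  have h4 : ContDiffAt ℝ 2 (fun y => fderiv ℝ w y (b * (1 - (starRingEnd ℂ) b * y))) u :=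
    h2.clm_apply (by fun_prop)
  have hd : ∀ h, fderiv ℝ (lap w) u h = h.re * fderiv ℝ (lap w) u 1
      + h.im * fderiv ℝ (lap w) u Complex.I := by
    intro h
    conv_lhs => rw [show h = h.re • (1 : ℂ) + h.im • Complex.I by apply Complex.ext <;> simp]
    rw [map_add, map_smul, map_smul]; simp
  unfold lapTransform
  rw [lap_add ((hN.mul h1).add (contDiffAt_const.mul h4)) (contDiffAt_const.mul h3),
    lap_add (hN.mul h1) (contDiffAt_const.mul h4), lap_mul hN h1, lap_const_mul _ h4,
    lap_const_mul _ h3, lap_normSq_affine, lap_fderiv_affine hw, fderiv_normSq_affine,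
    fderiv_normSq_affine, hd (b * _), norm_neg, RCLike.norm_conj,
    show 1 + -(starRingEnd ℂ) b * u = 1 - (starRingEnd ℂ) b * u by ring]
  simp
  ring

/-- The automorphism of the unit disk with `0 ↦ b` and positive derivative at `0`. -/
noncomputable def mob (b z : ℂ) : ℂ := (z + b) / (1 + (starRingEnd ℂ) b * z)

lemma mob_den_ne {b z : ℂ} (hb : ‖b‖ < 1) (hz : ‖z‖ < 1) : 1 + (starRingEnd ℂ) b * z ≠ 0 := by
  intro h
  have h1 : (starRingEnd ℂ) b * z = -1 := by linear_combination h
  have h2 : ‖b‖ * ‖z‖ = 1 := by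
    have := congrArg norm h1
    simpa using this
  nlinarith [norm_nonneg b, norm_nonneg z]

lemma mob_norm_identity {b z : ℂ} (h : 1 + (starRingEnd ℂ) b * z ≠ 0) :
    (1 - ‖mob b z‖ ^ 2) * ‖1 + (starRingEnd ℂ) b * z‖ ^ 2
      = (1 - ‖b‖ ^ 2) * (1 - ‖z‖ ^ 2) := by
  have h0 : ‖1 + (starRingEnd ℂ) b * z‖ ≠ 0 := norm_ne_zero_iff.2 h
  have : ‖mob b z‖ ^ 2 * ‖1 + (starRingEnd ℂ) b * z‖ ^ 2 = ‖z + b‖ ^ 2 := by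
    rw [mob, norm_div, div_pow, div_mul_cancel₀ _ (pow_ne_zero 2 h0)]
  rw [sub_mul, this]
  simp only [← Complex.normSq_eq_norm_sq, Complex.normSq_apply]
  simp
  ring

lemma mob_mem {b z : ℂ} (hb : ‖b‖ < 1) (hz : ‖z‖ < 1) : ‖mob b z‖ < 1 := by
  have h := mob_den_ne hb hz
  have h1 := mob_norm_identity h
  have h2 : 0 < ‖1 + (starRingEnd ℂ) b * z‖ ^ 2 := by positivity
  have h3 : 0 < (1 - ‖b‖ ^ 2) * (1 - ‖z‖ ^ 2) := by
    apply mul_pos <;> nlinarith [norm_nonneg b, norm_nonneg z]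
  rw [← h1] at h3
  have := pos_of_mul_pos_left h3 h2.le
  nlinarith [norm_nonneg (mob b z)]

lemma hasDerivAt_mob {b z : ℂ} (h : 1 + (starRingEnd ℂ) b * z ≠ 0) :
    HasDerivAt (mob b) ((1 - ‖b‖ ^ 2 : ℝ) / (1 + (starRingEnd ℂ) b * z) ^ 2) z := by
  have := ((hasDerivAt_id z).add_const b).div
    (((hasDerivAt_id z).const_mul ((starRingEnd ℂ) b)).const_add 1) h
  refine HasDerivAt.congr_deriv (this : HasDerivAt (mob b) _ z) ?_
  have e : ((‖b‖ ^ 2 : ℝ) : ℂ) = b * (starRingEnd ℂ) b := by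
    rw [Complex.mul_conj, Complex.normSq_eq_norm_sq]
  push_cast at e ⊢
  rw [e]
  simp; ring

lemma hasDerivAt_mob' {b z : ℂ} (h : 1 + (starRingEnd ℂ) b * z ≠ 0) :
    ∃ d, HasDerivAt (fun z => ((1 - ‖b‖ ^ 2 : ℝ) : ℂ) / (1 + (starRingEnd ℂ) b * z) ^ 2) d z :=
  ⟨_, (hasDerivAt_const z _).div
    ((((hasDerivAt_id z).const_mul ((starRingEnd ℂ) b)).const_add 1).pow 2) (pow_ne_zero 2 h)⟩

lemma one_sub_mob {b z : ℂ} (h : 1 + (starRingEnd ℂ) b * z ≠ 0) :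
    1 - (starRingEnd ℂ) b * mob b z = (1 - ‖b‖ ^ 2 : ℝ) / (1 + (starRingEnd ℂ) b * z) := by
  have e : ((‖b‖ ^ 2 : ℝ) : ℂ) = b * (starRingEnd ℂ) b := by
    rw [Complex.mul_conj, Complex.normSq_eq_norm_sq]
  push_cast at e ⊢
  rw [e, mob]
  field_simp
  ring

/-- The weight transplanted to the disk by `mob b`, with the conformal factor that preserves
super-biharmonicity. -/
noncomputable def transplant (b : ℂ) (w : ℂ → ℝ) (z : ℂ) : ℝ :=
  ‖1 + (starRingEnd ℂ) b * z‖ ^ 2 * w (mob b z)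

lemma eventually_mob_den {b z : ℂ} (h : 1 + (starRingEnd ℂ) b * z ≠ 0) :
    ∀ᶠ y in 𝓝 z, 1 + (starRingEnd ℂ) b * y ≠ 0 := by
  have : ContinuousAt (fun y : ℂ => 1 + (starRingEnd ℂ) b * y) z := by fun_prop
  exact this.eventually_ne h

lemma contDiffAt_mob {b z : ℂ} (h : 1 + (starRingEnd ℂ) b * z ≠ 0) {n : WithTop ℕ∞} :
    ContDiffAt ℝ n (mob b) z := by
  unfold mob
  have h1 : ContDiffAt ℝ n (fun y : ℂ => y + b) z := by fun_prop
  have h2 : ContDiffAt ℝ n (fun y : ℂ => 1 + (starRingEnd ℂ) b * y) z := by fun_prop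
  have h3 : ContDiffAt ℝ n (fun y : ℂ => (1 + (starRingEnd ℂ) b * y)⁻¹) z := h2.inv h
  exact h1.mul h3

lemma lap_mob {b z : ℂ} {F : ℂ → ℝ} (h : 1 + (starRingEnd ℂ) b * z ≠ 0)
    (hF : ContDiffAt ℝ 2 F (mob b z)) :
    lap (fun y => F (mob b y)) z
      = ‖((1 - ‖b‖ ^ 2 : ℝ) : ℂ) / (1 + (starRingEnd ℂ) b * z) ^ 2‖ ^ 2 * lap F (mob b z) := by
  obtain ⟨d, hd⟩ := hasDerivAt_mob' h
  exact lap_comp hF ((eventually_mob_den h).mono fun y hy => hasDerivAt_mob hy) hd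

/-- The first half of the conformal covariance of the bi-Laplacian: one Laplacian of the
transplanted weight. -/
lemma lap_transplant {b z : ℂ} {w : ℂ → ℝ} (h : 1 + (starRingEnd ℂ) b * z ≠ 0)
    (hw : ContDiffAt ℝ 2 w (mob b z)) :
    lap (transplant b w) z = lapTransform b w (mob b z) := by
  set k : ℂ := 1 + (starRingEnd ℂ) b * z with hk
  set C : ℝ := 1 - ‖b‖ ^ 2 with hC
  have hW : ContDiffAt ℝ 2 (fun y => w (mob b y)) z := hw.comp z (contDiffAt_mob h)
  have hN := (contDiff_normSq_affine ((starRingEnd ℂ) b) (n := 2)).contDiffAt (x := z)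
  have hdW : ∀ x, fderiv ℝ (fun y => w (mob b y)) z x
      = fderiv ℝ w (mob b z) ((C : ℂ) / k ^ 2 * x) := by
    intro x
    have := (hw.differentiableAt (by norm_num)).hasFDerivAt.comp z
      ((hasDerivAt_mob h).hasFDerivAt.restrictScalars ℝ)
    erw [this.fderiv]
    simp [mul_comm, hC, hk]
  have hgrad : fderiv ℝ (fun y : ℂ => ‖1 + (starRingEnd ℂ) b * y‖ ^ 2) z 1
        * fderiv ℝ (fun y => w (mob b y)) z 1
      + fderiv ℝ (fun y : ℂ => ‖1 + (starRingEnd ℂ) b * y‖ ^ 2) z Complex.I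
        * fderiv ℝ (fun y => w (mob b y)) z Complex.I
      = 2 * fderiv ℝ w (mob b z) (b * (1 - (starRingEnd ℂ) b * mob b z)) := by
    have lin1 : ∀ (p q : ℝ) (x y : ℂ), p * fderiv ℝ w (mob b z) x + q * fderiv ℝ w (mob b z) y
        = fderiv ℝ w (mob b z) (p • x + q • y) := by
      intro p q x y; rw [map_add, map_smul, map_smul]; rfl
    have lin2 : ∀ (p : ℝ) (x : ℂ), p * fderiv ℝ w (mob b z) x
        = fderiv ℝ w (mob b z) (p • x) := by
      intro p x; rw [map_smul]; rfl
    rw [hdW, hdW, fderiv_normSq_affine, fderiv_normSq_affine, one_sub_mob h, ← hk, ← hC, lin1,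
      lin2]
    congr 1
    have e3 : ∀ c : ℂ, (c.re : ℂ) + (c * Complex.I).re * Complex.I = (starRingEnd ℂ) c := by
      intro c; apply Complex.ext <;> simp
    have e4 := e3 ((starRingEnd ℂ) k * (starRingEnd ℂ) b)
    simp only [map_mul, Complex.conj_conj] at e4
    simp only [Complex.real_smul, mul_one, ← mul_assoc]
    push_cast
    have : (2 : ℂ) * (((starRingEnd ℂ) k * (starRingEnd ℂ) b).re : ℂ) * ((C : ℂ) / k ^ 2)
        + 2 * (((starRingEnd ℂ) k * (starRingEnd ℂ) b * Complex.I).re : ℂ) * ((C : ℂ) / k ^ 2)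
          * Complex.I = 2 * (k * b) * ((C : ℂ) / k ^ 2) := by
      rw [← e4]; ring
    rw [this]
    field_simp
  unfold transplant
  rw [lap_mul hN hW, hgrad, lap_mob h hw, lap_normSq_affine, RCLike.norm_conj]
  unfold lapTransform
  rw [show 1 + -(starRingEnd ℂ) b * mob b z = 1 - (starRingEnd ℂ) b * mob b z by ring,
    one_sub_mob h, ← hk, ← hC]
  have hk0 : ‖k‖ ≠ 0 := norm_ne_zero_iff.2 h
  rw [norm_div, norm_div, norm_pow]
  field_simp
  ring

/-! ### Circle integrals -/

/-- Differentiation under the integral sign over the angle, for radii in `(-1, 1)`. -/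
lemma hasDerivAt_param {h h' : ℝ → ℝ → ℝ}
    (hc : ∀ r ∈ Set.Ioo (-1 : ℝ) 1, Continuous (h r))
    (hc' : ContinuousOn (fun x : ℝ × ℝ => h' x.1 x.2) (Set.Ioo (-1 : ℝ) 1 ×ˢ Set.univ))
    (hd : ∀ r ∈ Set.Ioo (-1 : ℝ) 1, ∀ θ, HasDerivAt (fun x => h x θ) (h' r θ) r)
    {r : ℝ} (hr : r ∈ Set.Ioo (-1 : ℝ) 1) :
    HasDerivAt (fun x => ∫ θ in (0 : ℝ)..(2 * π), h x θ) (∫ θ in (0 : ℝ)..(2 * π), h' r θ) r := by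
  obtain ⟨δ, hδ, hsub⟩ := Metric.isOpen_iff.1 (isOpen_Ioo (a := (-1 : ℝ)) (b := 1)) r hr
  set s : Set ℝ := Metric.closedBall r (δ / 2)
  have hs : s ⊆ Set.Ioo (-1 : ℝ) 1 :=
    (Metric.closedBall_subset_ball (by linarith)).trans hsub
  have hs' : s ∈ 𝓝 r := Metric.closedBall_mem_nhds r (by linarith)
  have hK : IsCompact (s ×ˢ Set.Icc (0 : ℝ) (2 * π)) :=
    (isCompact_closedBall r _).prod isCompact_Icc
  obtain ⟨M, hM⟩ := hK.exists_bound_of_continuousOn (f := fun x : ℝ × ℝ => h' x.1 x.2)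
    (hc'.mono (Set.prod_mono hs (Set.subset_univ _)))
  have hcr : Continuous (h' r) := by
    have : ContinuousOn ((fun x : ℝ × ℝ => h' x.1 x.2) ∘ fun θ => (r, θ)) Set.univ :=
      hc'.comp (by fun_prop) (fun θ _ => ⟨hr, trivial⟩)
    exact continuousOn_univ.1 this
  refine (intervalIntegral.hasDerivAt_integral_of_dominated_loc_of_deriv_le (bound := fun _ => M)
    hs' ?_ ((hc r hr).intervalIntegrable _ _) hcr.aestronglyMeasurable ?_ ?_ ?_).2
  · filter_upwards [isOpen_Ioo.mem_nhds hr] with x hx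
    exact (hc x hx).aestronglyMeasurable
  · refine ae_of_all _ fun θ hθ x hx => ?_
    rw [Set.uIoc_of_le (by positivity)] at hθ
    exact hM (x, θ) ⟨hx, hθ.1.le, hθ.2⟩
  · simp
  · exact ae_of_all _ fun θ _ x hx => hd x (hs hx) θ

/-- The point with polar coordinates `(r, θ)`. -/
noncomputable def pt (r θ : ℝ) : ℂ := (r : ℂ) * Complex.exp (θ * Complex.I)

lemma norm_pt (r θ : ℝ) : ‖pt r θ‖ = |r| := by
  simp [pt, Complex.norm_exp_ofReal_mul_I]

lemma norm_pt_lt {r θ : ℝ} (hr : r ∈ Set.Ioo (-1 : ℝ) 1) : ‖pt r θ‖ < 1 := by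
  rw [norm_pt]; exact abs_lt.2 hr

lemma continuous_pt : Continuous (fun x : ℝ × ℝ => pt x.1 x.2) := by
  unfold pt; fun_prop

lemma hasDerivAt_pt_left (r θ : ℝ) :
    HasDerivAt (fun x => pt x θ) (Complex.exp (θ * Complex.I)) r := by
  have := (Complex.ofRealCLM.hasDerivAt (x := r)).mul_const (Complex.exp (θ * Complex.I))
  simpa [pt] using this

lemma hasDerivAt_pt_right (r θ : ℝ) :
    HasDerivAt (fun x => pt r x) (Complex.I * pt r θ) θ := by
  have h1 := ((Complex.ofRealCLM.hasDerivAt (x := θ)).mul_const Complex.I).cexp.const_mul (r : ℂ)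
  refine HasDerivAt.congr_deriv (h1 : HasDerivAt (fun x => pt r x) _ θ) ?_
  simp [pt]; ring

lemma pt_zero_two_pi (r : ℝ) : pt r (2 * π) = pt r 0 := by
  simp [pt]

/-- The integral of `F` over the circle of radius `r`, with respect to the angle. -/
noncomputable def ringInt (F : ℂ → ℝ) (r : ℝ) : ℝ := ∫ θ in (0 : ℝ)..(2 * π), F (pt r θ)

/-- The flux of the gradient of `F` through the circle of radius `r`. -/
noncomputable def flux (F : ℂ → ℝ) (r : ℝ) : ℝ :=
  ∫ θ in (0 : ℝ)..(2 * π), fderiv ℝ F (pt r θ) (pt r θ)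

lemma hasDerivAt_ringInt {F : ℂ → ℝ} (hF : ∀ z, ‖z‖ < 1 → ContDiffAt ℝ 2 F z)
    {r : ℝ} (hr : r ∈ Set.Ioo (-1 : ℝ) 1) :
    HasDerivAt (ringInt F)
      (∫ θ in (0 : ℝ)..(2 * π), fderiv ℝ F (pt r θ) (Complex.exp (θ * Complex.I))) r := by
  refine hasDerivAt_param (h := fun r θ => F (pt r θ))
    (h' := fun r θ => fderiv ℝ F (pt r θ) (Complex.exp (θ * Complex.I))) ?_ ?_ ?_ hr
  · intro r hr
    rw [continuous_iff_continuousAt]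
    intro θ
    exact (hF _ (norm_pt_lt hr)).continuousAt.comp (f := fun θ => pt r θ)
      (hasDerivAt_pt_right r θ).continuousAt
  · rintro ⟨r, θ⟩ ⟨hr, -⟩
    refine ContinuousAt.continuousWithinAt (ContinuousAt.clm_apply ?_ (by fun_prop))
    exact (differentiableAt_fderiv (hF _ (norm_pt_lt hr))).continuousAt.comp
      (f := fun x : ℝ × ℝ => pt x.1 x.2) continuous_pt.continuousAt
  · intro r hr θ
    exact ((hF _ (norm_pt_lt hr)).differentiableAt (by norm_num)).hasFDerivAt.comp_hasDerivAt
      (f := fun x => pt x θ) r (hasDerivAt_pt_left r θ)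

lemma flux_eq {F : ℂ → ℝ} (r : ℝ) : flux F r
    = r * ∫ θ in (0 : ℝ)..(2 * π), fderiv ℝ F (pt r θ) (Complex.exp (θ * Complex.I)) := by
  rw [flux, ← intervalIntegral.integral_const_mul]
  congr 1; funext θ
  conv_lhs => arg 2; rw [pt, ← Complex.real_smul]
  rw [map_smul, smul_eq_mul]

lemma continuousAt_fderiv_fderiv {F : ℂ → ℝ} (hF : ∀ z, ‖z‖ < 1 → ContDiffAt ℝ 2 F z)
    {z : ℂ} (hz : ‖z‖ < 1) :
    ContinuousAt (fderiv ℝ (fderiv ℝ F)) z :=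
  (((hF z hz).fderiv_right (m := 1) (by norm_num)).fderiv_right (m := 0)
    (by norm_num)).continuousAt

lemma continuousAt_fderiv_pt {F : ℂ → ℝ} (hF : ∀ z, ‖z‖ < 1 → ContDiffAt ℝ 2 F z)
    {r : ℝ} (hr : r ∈ Set.Ioo (-1 : ℝ) 1) (θ : ℝ) :
    ContinuousAt (fun x : ℝ × ℝ => fderiv ℝ F (pt x.1 x.2)) (r, θ) :=
  (differentiableAt_fderiv (hF _ (norm_pt_lt hr))).continuousAt.comp
    (f := fun x : ℝ × ℝ => pt x.1 x.2) continuous_pt.continuousAt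

lemma continuousAt_fderiv_fderiv_pt {F : ℂ → ℝ} (hF : ∀ z, ‖z‖ < 1 → ContDiffAt ℝ 2 F z)
    {r : ℝ} (hr : r ∈ Set.Ioo (-1 : ℝ) 1) (θ : ℝ) :
    ContinuousAt (fun x : ℝ × ℝ => fderiv ℝ (fderiv ℝ F) (pt x.1 x.2)) (r, θ) :=
  (continuousAt_fderiv_fderiv hF (norm_pt_lt hr)).comp
    (f := fun x : ℝ × ℝ => pt x.1 x.2) continuous_pt.continuousAt

lemma hasDerivAt_flux_aux {F : ℂ → ℝ} (hF : ∀ z, ‖z‖ < 1 → ContDiffAt ℝ 2 F z)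
    {r : ℝ} (hr : r ∈ Set.Ioo (-1 : ℝ) 1) :
    HasDerivAt (flux F) (∫ θ in (0 : ℝ)..(2 * π),
      (fderiv ℝ (fderiv ℝ F) (pt r θ) (Complex.exp (θ * Complex.I)) (pt r θ)
        + fderiv ℝ F (pt r θ) (Complex.exp (θ * Complex.I)))) r := by
  refine hasDerivAt_param (h := fun r θ => fderiv ℝ F (pt r θ) (pt r θ))
    (h' := fun r θ => fderiv ℝ (fderiv ℝ F) (pt r θ) (Complex.exp (θ * Complex.I)) (pt r θ)
      + fderiv ℝ F (pt r θ) (Complex.exp (θ * Complex.I))) ?_ ?_ ?_ hr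
  · intro r hr
    have hsec : Continuous (fun θ : ℝ => (r, θ)) := by fun_prop
    exact (continuous_iff_continuousAt.2 fun θ =>
      (continuousAt_fderiv_pt hF hr θ).comp (f := fun θ => (r, θ)) hsec.continuousAt).clm_apply
        (continuous_pt.comp hsec)
  · rintro ⟨r, θ⟩ ⟨hr, -⟩
    refine ContinuousAt.continuousWithinAt (ContinuousAt.add ?_ ?_)
    · exact ((continuousAt_fderiv_fderiv_pt hF hr θ).clm_apply (by fun_prop)).clm_apply
        continuous_pt.continuousAt
    · exact (continuousAt_fderiv_pt hF hr θ).clm_apply (by fun_prop)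
  · intro r hr θ
    have e1 := (differentiableAt_fderiv (hF _ (norm_pt_lt hr))).hasFDerivAt.comp_hasDerivAt
      (f := fun x => pt x θ) r (hasDerivAt_pt_left r θ)
    exact e1.clm_apply (hasDerivAt_pt_left r θ)

/-- The divergence theorem on discs, in differentiated form. -/
lemma hasDerivAt_flux {F : ℂ → ℝ} (hF : ∀ z, ‖z‖ < 1 → ContDiffAt ℝ 2 F z)
    {r : ℝ} (hr : r ∈ Set.Ioo (0 : ℝ) 1) :
    HasDerivAt (flux F) (r * ringInt (lap F) r) r := by
  have hr' : r ∈ Set.Ioo (-1 : ℝ) 1 := ⟨by linarith [hr.1], hr.2⟩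
  have hsec : ∀ θ : ℝ, Continuous (fun θ : ℝ => (r, θ)) := fun θ => by fun_prop
  have c1 : Continuous fun θ => fderiv ℝ F (pt r θ) := continuous_iff_continuousAt.2 fun θ =>
    (continuousAt_fderiv_pt hF hr' θ).comp (f := fun θ => (r, θ)) (hsec θ).continuousAt
  have c2 : Continuous fun θ => fderiv ℝ (fderiv ℝ F) (pt r θ) :=
    continuous_iff_continuousAt.2 fun θ =>
    (continuousAt_fderiv_fderiv_pt hF hr' θ).comp (f := fun θ => (r, θ)) (hsec θ).continuousAt
  have c0 : Continuous fun θ => pt r θ := continuous_pt.comp (hsec 0)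
  refine HasDerivAt.congr_deriv (hasDerivAt_flux_aux hF hr') ?_
  -- the tangential part is the derivative of a periodic function of the angle
  have ang : ∫ θ in (0 : ℝ)..(2 * π),
      (fderiv ℝ (fderiv ℝ F) (pt r θ) (Complex.I * pt r θ) (Complex.I * pt r θ)
        - fderiv ℝ F (pt r θ) (pt r θ)) = 0 := by
    rw [intervalIntegral.integral_eq_sub_of_hasDerivAt
      (f := fun θ => fderiv ℝ F (pt r θ) (Complex.I * pt r θ))]
    · simp [pt_zero_two_pi]
    · intro θ _
      have e1 := (differentiableAt_fderiv (hF _ (norm_pt_lt hr'))).hasFDerivAt.comp_hasDerivAt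
        (f := fun x => pt r x) θ (hasDerivAt_pt_right r θ)
      have e2 := e1.clm_apply ((hasDerivAt_pt_right r θ).const_mul Complex.I)
      refine HasDerivAt.congr_deriv e2 ?_
      rw [← mul_assoc, Complex.I_mul_I]
      simp [sub_eq_add_neg, Function.comp]
    · refine Continuous.intervalIntegrable ?_ _ _
      exact ((c2.clm_apply (by fun_prop)).clm_apply (by fun_prop)).sub (c1.clm_apply c0)
  have hne : r ≠ 0 := hr.1.ne'
  apply mul_left_cancel₀ hne
  have i1 : IntervalIntegrable (fun θ =>
      (fderiv ℝ (fderiv ℝ F) (pt r θ) (Complex.I * pt r θ) (Complex.I * pt r θ)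
        - fderiv ℝ F (pt r θ) (pt r θ))) volume 0 (2 * π) :=
    (((c2.clm_apply (by fun_prop)).clm_apply (by fun_prop)).sub
      (c1.clm_apply c0)).intervalIntegrable _ _
  have i2 : IntervalIntegrable (fun θ => r * (fderiv ℝ (fderiv ℝ F) (pt r θ)
      (Complex.exp (θ * Complex.I)) (pt r θ)
    + fderiv ℝ F (pt r θ) (Complex.exp (θ * Complex.I)))) volume 0 (2 * π) := by
    refine Continuous.intervalIntegrable ?_ _ _
    exact continuous_const.mul (((c2.clm_apply (by fun_prop)).clm_apply c0).add
      (c1.clm_apply (by fun_prop)))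
  have hadd := intervalIntegral.integral_add i2 i1
  rw [ang, add_zero, intervalIntegral.integral_const_mul] at hadd
  rw [← hadd, ringInt, ← mul_assoc, ← intervalIntegral.integral_const_mul]
  congr 1; funext θ
  have hz := norm_pt_lt (θ := θ) hr'
  have bt := bilin_trace (fderiv ℝ (fderiv ℝ F) (pt r θ)) (snd_symm (hF _ hz) _ _) (pt r θ)
  rw [norm_pt, sq_abs] at bt
  have p1 : ∀ L : ℂ →L[ℝ] ℝ, L (pt r θ) = r * L (Complex.exp (θ * Complex.I)) := by
    intro L; rw [pt, ← Complex.real_smul, map_smul, smul_eq_mul]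
  have p2 : ∀ L : ℂ →L[ℝ] ℂ →L[ℝ] ℝ, L (pt r θ) = r • L (Complex.exp (θ * Complex.I)) := by
    intro L; rw [pt, ← Complex.real_smul, map_smul]
  have q1 := p1 (fderiv ℝ F (pt r θ))
  have q2 := congrArg (fun L : ℂ →L[ℝ] ℝ => L (pt r θ))
    (p2 (fderiv ℝ (fderiv ℝ F) (pt r θ)))
  simp only [smul_apply, smul_eq_mul] at q2
  unfold lap
  linarith

lemma flux_zero {F : ℂ → ℝ} : flux F 0 = 0 := by rw [flux_eq, zero_mul]

lemma continuousOn_flux {F : ℂ → ℝ} (hF : ∀ z, ‖z‖ < 1 → ContDiffAt ℝ 2 F z)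
    : ContinuousOn (flux F) (Set.Ico 0 1) := fun _ hr =>
  (hasDerivAt_flux_aux hF ⟨by linarith [hr.1], hr.2⟩).continuousAt.continuousWithinAt

/-- Circle integrals of a subharmonic function increase with the radius. -/
lemma monotoneOn_ringInt {F : ℂ → ℝ} (hF : ∀ z, ‖z‖ < 1 → ContDiffAt ℝ 2 F z)
    (hlap : ∀ z, ‖z‖ < 1 → 0 ≤ lap F z) :
    MonotoneOn (ringInt F) (Set.Ico 0 1) := by
  have hsub : ∀ r ∈ Set.Ico (0 : ℝ) 1, r ∈ Set.Ioo (-1 : ℝ) 1 := fun r hr =>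
    ⟨by linarith [hr.1], hr.2⟩
  have hflux : ∀ r ∈ Set.Ico (0 : ℝ) 1, 0 ≤ flux F r := by
    intro r hr
    have hm : MonotoneOn (flux F) (Set.Ico 0 1) := by
      refine monotoneOn_of_deriv_nonneg (convex_Ico 0 1) (continuousOn_flux hF) ?_ ?_
      · rw [interior_Ico]
        exact fun r hr => (hasDerivAt_flux hF hr).differentiableAt.differentiableWithinAt
      · rw [interior_Ico]
        intro r hr
        rw [(hasDerivAt_flux hF hr).deriv]
        refine mul_nonneg hr.1.le (intervalIntegral.integral_nonneg (by positivity) fun θ _ => ?_)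
        exact hlap _ (norm_pt_lt ⟨by linarith [hr.1], hr.2⟩)
    rw [← flux_zero (F := F)]
    exact hm ⟨le_rfl, one_pos⟩ hr hr.1
  refine monotoneOn_of_deriv_nonneg (convex_Ico 0 1)
    (fun r hr => (hasDerivAt_ringInt hF (hsub r hr)).continuousAt.continuousWithinAt) ?_ ?_
  · rw [interior_Ico]
    exact fun r hr =>
      (hasDerivAt_ringInt hF (hsub r ⟨hr.1.le, hr.2⟩)).differentiableAt.differentiableWithinAt
  · rw [interior_Ico]
    intro r hr
    rw [(hasDerivAt_ringInt hF (hsub r ⟨hr.1.le, hr.2⟩)).deriv]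
    have := hflux r ⟨hr.1.le, hr.2⟩
    rw [flux_eq] at this
    exact nonneg_of_mul_nonneg_right this hr.1

/-- If the circle integrals of the Laplacian increase, the circle integrals of the function are
convex in the squared radius: with `s = r²`, the derivative in `s` is `flux F r / (2 r²)`, a quarter
of the average of the circle integrals of the Laplacian against `2 x dx / r²` over `(0, r)`. -/
lemma convexOn_ringInt_sqrt {F : ℂ → ℝ} (hF : ∀ z, ‖z‖ < 1 → ContDiffAt ℝ 2 F z)
    (hlap : MonotoneOn (ringInt (lap F)) (Set.Ico 0 1)) :
    ConvexOn ℝ (Set.Ico 0 1) (fun s => ringInt F (√s)) := by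
  have hsub : ∀ r ∈ Set.Ico (0 : ℝ) 1, r ∈ Set.Ioo (-1 : ℝ) 1 := fun r hr =>
    ⟨by linarith [hr.1], hr.2⟩
  have hsq : ∀ s ∈ Set.Ico (0 : ℝ) 1, √s ∈ Set.Ico (0 : ℝ) 1 := fun s hs =>
    ⟨Real.sqrt_nonneg s, by rw [Real.sqrt_lt' one_pos]; simpa using hs.2⟩
  have hsq' : ∀ s ∈ Set.Ioo (0 : ℝ) 1, √s ∈ Set.Ioo (0 : ℝ) 1 := fun s hs =>
    ⟨Real.sqrt_pos.2 hs.1, (hsq s ⟨hs.1.le, hs.2⟩).2⟩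
  -- the flux is at most what it would be if the Laplacian had constant mean inside
  have hle : ∀ r ∈ Set.Ioo (0 : ℝ) 1, 2 * flux F r ≤ r ^ 2 * ringInt (lap F) r := by
    intro r hr
    have hIr : Set.Icc 0 r ⊆ Set.Ico (0 : ℝ) 1 := fun x hx => ⟨hx.1, hx.2.trans_lt hr.2⟩
    have hm : MonotoneOn (fun x => ringInt (lap F) r * x ^ 2 - 2 * flux F x) (Set.Icc 0 r) := by
      have hd : ∀ x ∈ Set.Ioo 0 r, HasDerivAt (fun x => ringInt (lap F) r * x ^ 2 - 2 * flux F x)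
          (ringInt (lap F) r * (2 * x) - 2 * (x * ringInt (lap F) x)) x := by
        intro x hx
        have := ((hasDerivAt_pow 2 x).const_mul (ringInt (lap F) r)).sub
          ((hasDerivAt_flux hF ⟨hx.1, hx.2.trans hr.2⟩).const_mul 2)
        exact HasDerivAt.congr_deriv (this : HasDerivAt (fun x => ringInt (lap F) r * x ^ 2
          - 2 * flux F x) _ x) (by simp)
      refine monotoneOn_of_deriv_nonneg (convex_Icc 0 r) ?_ ?_ ?_
      · exact (by fun_prop : Continuous fun x : ℝ => ringInt (lap F) r * x ^ 2).continuousOn.sub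
          (continuousOn_const.mul ((continuousOn_flux hF).mono hIr))
      · rw [interior_Icc]
        exact fun x hx => (hd x hx).differentiableAt.differentiableWithinAt
      · rw [interior_Icc]
        intro x hx
        rw [(hd x hx).deriv]
        have := hlap ⟨hx.1.le, hx.2.trans hr.2⟩ ⟨hr.1.le, hr.2⟩ hx.2.le
        nlinarith [hx.1]
    have := hm ⟨le_rfl, hr.1.le⟩ ⟨hr.1.le, le_rfl⟩ hr.1.le
    simp only [flux_zero] at this
    nlinarith
  have hmono : MonotoneOn (fun r => flux F r / r ^ 2) (Set.Ioo 0 1) := by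
    have hd : ∀ x ∈ Set.Ioo (0 : ℝ) 1, HasDerivAt (fun r => flux F r / r ^ 2) _ x := fun x hx =>
      (hasDerivAt_flux hF hx).div (hasDerivAt_pow 2 x) (pow_ne_zero 2 hx.1.ne')
    refine monotoneOn_of_deriv_nonneg (convex_Ioo 0 1)
      (fun x hx => (hd x hx).continuousAt.continuousWithinAt) ?_ ?_
    · rw [interior_Ioo]
      exact fun x hx => (hd x hx).differentiableAt.differentiableWithinAt
    · rw [interior_Ioo]
      intro x hx
      rw [(hd x hx).deriv]
      refine div_nonneg ?_ (by positivity)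
      have := hle x hx
      simp
      nlinarith [hx.1]
  have hd : ∀ s ∈ Set.Ioo (0 : ℝ) 1, HasDerivAt (fun s => ringInt F (√s))
      ((1 / 2) * (flux F (√s) / (√s) ^ 2)) s := by
    intro s hs
    have := (hasDerivAt_ringInt hF (hsub _ (hsq s ⟨hs.1.le, hs.2⟩))).comp s
      (Real.hasDerivAt_sqrt hs.1.ne')
    refine HasDerivAt.congr_deriv this ?_
    rw [flux_eq]
    have := (hsq' s hs).1.ne'
    generalize ∫ θ in (0 : ℝ)..(2 * π),
      fderiv ℝ F (pt (√s) θ) (Complex.exp (θ * Complex.I)) = J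
    field_simp
  refine MonotoneOn.convexOn_of_deriv (convex_Ico 0 1) ?_ ?_ ?_
  · intro s hs
    exact ((hasDerivAt_ringInt hF (hsub _ (hsq s hs))).continuousAt.comp
      Real.continuous_sqrt.continuousAt).continuousWithinAt
  · rw [interior_Ico]
    exact fun s hs => (hd s hs).differentiableAt.differentiableWithinAt
  · rw [interior_Ico]
    intro s hs t ht hst
    rw [(hd s hs).deriv, (hd t ht).deriv]
    have := hmono (hsq' s hs) (hsq' t ht) (Real.sqrt_le_sqrt hst)
    simp only at this
    linarith

/-- Circle integrals of the transplanted weight are convex in the squared radius. -/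
lemma convexOn_transplant {w : ℂ → ℝ} (hw : ∀ z, ‖z‖ < 1 → ContDiffAt ℝ 4 w z)
    (hsbh : ∀ z, ‖z‖ < 1 → 0 ≤ lap (lap w) z) {b : ℂ} (hb : ‖b‖ < 1) :
    ConvexOn ℝ (Set.Ico 0 1) (fun s => ringInt (transplant b w) (√s)) := by
  have hU : ∀ z, ‖z‖ < 1 → ContDiffAt ℝ 2 (transplant b w) z := fun z hz =>
    (contDiff_normSq_affine _).contDiffAt.mul
      (((hw _ (mob_mem hb hz)).of_le (by norm_num)).comp z (contDiffAt_mob (mob_den_ne hb hz)))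
  have hX : ∀ z, ‖z‖ < 1 → ContDiffAt ℝ 2 (lapTransform b w) (mob b z) := fun z hz =>
    contDiffAt_lapTransform (hw _ (mob_mem hb hz))
  refine convexOn_ringInt_sqrt hU ?_
  have hm : MonotoneOn (ringInt (fun z => lapTransform b w (mob b z))) (Set.Ico 0 1) := by
    refine monotoneOn_ringInt
      (fun z hz => (hX z hz).comp z (contDiffAt_mob (mob_den_ne hb hz))) fun z hz => ?_
    rw [lap_mob (mob_den_ne hb hz) (hX z hz), lap_lapTransform (hw _ (mob_mem hb hz))]
    have := hsbh _ (mob_mem hb hz)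
    positivity
  refine hm.congr fun r hr => ?_
  unfold ringInt
  congr 1; funext θ
  have hz : ‖pt r θ‖ < 1 := norm_pt_lt ⟨by linarith [hr.1], hr.2⟩
  exact (lap_transplant (mob_den_ne hb hz) ((hw _ (mob_mem hb hz)).of_le (by norm_num))).symm

/-! ### Polar coordinates and change of variables -/

lemma lintegral_angle {F : ℂ → ℝ} (hF : ContinuousOn F (ball 0 1))
    (hF0 : ∀ z ∈ ball (0 : ℂ) 1, 0 ≤ F z) {r : ℝ} (hr : r ∈ Set.Ioo (-1 : ℝ) 1) :
    ∫⁻ θ in Set.Ioo (-π) π, ENNReal.ofReal (F (pt r θ)) = ENNReal.ofReal (ringInt F r) := by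
  have hmem : ∀ θ, pt r θ ∈ ball (0 : ℂ) 1 := fun θ => by simpa using norm_pt_lt hr
  have hc : Continuous fun θ => F (pt r θ) :=
    hF.comp_continuous (continuous_pt.comp (by fun_prop : Continuous fun θ : ℝ => (r, θ))) hmem
  have hper : Function.Periodic (fun θ => F (pt r θ)) (2 * π) := by
    intro θ
    have : pt r (θ + 2 * π) = pt r θ := by
      simp [pt, add_mul, Complex.exp_add]
    simp [this]
  have h1 : ringInt F r = ∫ θ in (-π)..π, F (pt r θ) := by
    have := hper.intervalIntegral_add_eq 0 (-π)
    rw [zero_add, show -π + 2 * π = π by ring] at this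
    exact this
  rw [h1, intervalIntegral.integral_of_le (by linarith [Real.pi_pos]), setLIntegral_congr
    Ioo_ae_eq_Ioc, ofReal_integral_eq_lintegral_ofReal]
  · exact (hc.integrableOn_Icc (a := -π) (b := π)).mono_set Set.Ioc_subset_Icc_self
  · exact ae_of_all _ fun θ => hF0 _ (hmem θ)

/-- Integration in polar coordinates over an annulus in the disc. -/
lemma lintegral_polar {F : ℂ → ℝ} (hF : ContinuousOn F (ball 0 1))
    (hF0 : ∀ z ∈ ball (0 : ℂ) 1, 0 ≤ F z) {a : ℝ} (ha : 0 ≤ a) :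
    ∫⁻ z in {z : ℂ | ‖z‖ ∈ Set.Ioo a 1}, ENNReal.ofReal (F z)
      = ∫⁻ r in Set.Ioo a 1, ENNReal.ofReal (r * ringInt F r) := by
  set S : Set ℂ := {z : ℂ | ‖z‖ ∈ Set.Ioo a 1} with hS
  have hSo : IsOpen S := isOpen_Ioo.preimage continuous_norm
  have hSb : S ⊆ ball 0 1 := fun z hz => by simpa using hz.2
  have hmeas : Measurable (S.indicator fun z => ENNReal.ofReal (F z)) := by
    have h : ContinuousOn (fun z => ENNReal.ofReal (F z)) S :=
      ENNReal.continuous_ofReal.comp_continuousOn (hF.mono hSb)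
    classical
    rw [← Set.piecewise_eq_indicator]
    exact h.measurable_piecewise continuousOn_const hSo.measurableSet
  have e1 : ∀ r θ : ℝ, Complex.polarCoord.symm (r, θ) = pt r θ := by
    intro r θ
    rw [Complex.polarCoord_symm_apply, pt, Complex.exp_mul_I]
    simp
  have hm2 : Measurable (fun x : ℝ × ℝ => ENNReal.ofReal x.1 *
      S.indicator (fun z => ENNReal.ofReal (F z)) (pt x.1 x.2)) :=
    (ENNReal.measurable_ofReal.comp measurable_fst).mul (hmeas.comp continuous_pt.measurable)
  have e2 : ∀ x : ℝ × ℝ, ENNReal.ofReal x.1 • S.indicator (fun z => ENNReal.ofReal (F z))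
      (Complex.polarCoord.symm x) = ENNReal.ofReal x.1 *
      S.indicator (fun z => ENNReal.ofReal (F z)) (pt x.1 x.2) := fun x => by
    rw [← e1]; rfl
  rw [← lintegral_indicator hSo.measurableSet, ← Complex.lintegral_comp_polarCoord_symm]
  simp_rw [e2]
  rw [show polarCoord.target = Set.Ioi (0 : ℝ) ×ˢ Set.Ioo (-π) π from rfl,
    Measure.volume_eq_prod, ← Measure.prod_restrict, lintegral_prod _ hm2.aemeasurable]
  rw [← lintegral_indicator measurableSet_Ioo, ← lintegral_indicator measurableSet_Ioi]
  refine lintegral_congr fun r => ?_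
  by_cases hr : r ∈ Set.Ioi (0 : ℝ)
  · rw [Set.indicator_of_mem hr]
    by_cases hr2 : r ∈ Set.Ioo a 1
    · rw [Set.indicator_of_mem hr2]
      have hp : ∀ θ, pt r θ ∈ S := fun θ => by
        show ‖pt r θ‖ ∈ Set.Ioo a 1
        rwa [norm_pt, abs_of_pos hr]
      simp only [Set.indicator_of_mem (hp _)]
      rw [lintegral_const_mul' _ _ ENNReal.ofReal_ne_top,
        lintegral_angle hF hF0 ⟨by linarith [hr2.1], hr2.2⟩, ENNReal.ofReal_mul (le_of_lt hr)]
    · have hp : ∀ θ, pt r θ ∉ S := fun θ => by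
        show ¬ ‖pt r θ‖ ∈ Set.Ioo a 1
        rwa [norm_pt, abs_of_pos hr]
      simp [Set.indicator_of_notMem hr2, Set.indicator_of_notMem (hp _)]
  · rw [Set.indicator_of_notMem hr, Set.indicator_of_notMem]
    exact fun h => hr (ha.trans_lt h.1)

lemma abs_det_mul (c : ℂ) :
    |((ContinuousLinearMap.toSpanSingleton ℂ c).restrictScalars ℝ).det| = ‖c‖ ^ 2 := by
  have : ((ContinuousLinearMap.toSpanSingleton ℂ c).restrictScalars ℝ).det = ‖c‖ ^ 2 := by
    simp [ContinuousLinearMap.det, LinearMap.det_restrictScalars,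
      Algebra.norm_complex_eq, Complex.normSq_eq_norm_sq]
  rw [this, abs_of_nonneg (by positivity)]

/-- Change of variables for holomorphic maps. -/
lemma lintegral_image_holo {S : Set ℂ} (hS : MeasurableSet S) {φ φ' : ℂ → ℂ}
    (h : ∀ z ∈ S, HasDerivAt φ (φ' z) z) (hi : Set.InjOn φ S) (g : ℂ → ENNReal) :
    ∫⁻ u in φ '' S, g u = ∫⁻ z in S, ENNReal.ofReal (‖φ' z‖ ^ 2) * g (φ z) := by
  rw [lintegral_image_eq_lintegral_abs_det_fderiv_mul volume hS
    (f' := fun z => (ContinuousLinearMap.toSpanSingleton ℂ (φ' z)).restrictScalars ℝ)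
    (fun z hz => ((h z hz).hasFDerivAt.restrictScalars ℝ).hasFDerivWithinAt) hi]
  simp_rw [abs_det_mul]

/-- The kernel for which `∫ kern b u * w u dA(u)` equals the integral of `transplant b w` over the
disc, see `lintegral_transplant`. -/
noncomputable def kern (b u : ℂ) : ℝ := (1 - ‖b‖ ^ 2) ^ 4 / ‖1 - (starRingEnd ℂ) b * u‖ ^ 6

lemma kern_nonneg (b u : ℂ) : 0 ≤ kern b u := by
  unfold kern; positivity

lemma kern_mob {b z : ℂ} (hb : ‖b‖ < 1) (hz : ‖z‖ < 1) :
    ‖((1 - ‖b‖ ^ 2 : ℝ) : ℂ) / (1 + (starRingEnd ℂ) b * z) ^ 2‖ ^ 2 * kern b (mob b z)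
      = ‖1 + (starRingEnd ℂ) b * z‖ ^ 2 := by
  have h := mob_den_ne hb hz
  have h0 : ‖1 + (starRingEnd ℂ) b * z‖ ≠ 0 := norm_ne_zero_iff.2 h
  have h1 : 1 - ‖b‖ ^ 2 ≠ 0 := by nlinarith [norm_nonneg b]
  rw [kern, one_sub_mob h, norm_div, norm_div, norm_pow, Complex.norm_real, Real.norm_eq_abs,
    div_pow, div_pow, sq_abs, show |1 - ‖b‖ ^ 2| ^ 6 = (1 - ‖b‖ ^ 2) ^ 6 from
      Even.pow_abs (by decide) _]
  field_simp

lemma mob_injOn {b : ℂ} (hb : ‖b‖ < 1) : Set.InjOn (mob b) (ball 0 1) := by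
  intro x hx y hy hxy
  have hx' := mob_den_ne hb (by simpa using hx)
  have hy' := mob_den_ne hb (by simpa using hy)
  have h1 : (1 : ℂ) - b * (starRingEnd ℂ) b ≠ 0 := by
    rw [Complex.mul_conj, Complex.normSq_eq_norm_sq]
    have : 1 - ‖b‖ ^ 2 ≠ 0 := by nlinarith [norm_nonneg b]
    exact_mod_cast this
  unfold mob at hxy
  rw [div_eq_div_iff hx' hy'] at hxy
  have : (1 - b * (starRingEnd ℂ) b) * (x - y) = 0 := by linear_combination hxy
  exact sub_eq_zero.1 ((mul_eq_zero.1 this).resolve_left h1)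

lemma mob_image {b : ℂ} (hb : ‖b‖ < 1) : ball 0 1 ⊆ mob b '' ball 0 1 := by
  intro u hu
  have hu' : ‖u‖ < 1 := by simpa using hu
  have hb' : ‖-b‖ < 1 := by simpa using hb
  refine ⟨mob (-b) u, by simpa using mob_mem hb' hu', ?_⟩
  have h1 := mob_den_ne hb' hu'
  have h2 : (1 : ℂ) - b * (starRingEnd ℂ) b ≠ 0 := by
    rw [Complex.mul_conj, Complex.normSq_eq_norm_sq]
    have : 1 - ‖b‖ ^ 2 ≠ 0 := by nlinarith [norm_nonneg b]
    exact_mod_cast this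
  have h3 := mob_den_ne hb (mob_mem hb' hu')
  unfold mob at h3 ⊢
  rw [div_eq_iff h3]
  have h4 : 1 - (starRingEnd ℂ) b * u ≠ 0 := by
    simpa [sub_eq_add_neg] using h1
  simp only [map_neg, neg_mul, ← sub_eq_add_neg]
  have h5 : (u - b) / (1 - (starRingEnd ℂ) b * u) * (1 - (starRingEnd ℂ) b * u) = u - b :=
    div_mul_cancel₀ _ h4
  linear_combination h5

lemma lintegral_transplant {w : ℂ → ℝ} {b : ℂ} (hb : ‖b‖ < 1) {S : Set ℂ} (hS : MeasurableSet S)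
    (hSb : S ⊆ ball 0 1) :
    ∫⁻ z in S, ENNReal.ofReal (transplant b w z)
      = ∫⁻ u in mob b '' S, ENNReal.ofReal (kern b u * w u) := by
  have hn : ∀ z ∈ S, ‖z‖ < 1 := fun z hz => by simpa using hSb hz
  rw [lintegral_image_holo hS (fun z hz => hasDerivAt_mob (mob_den_ne hb (hn z hz)))
    ((mob_injOn hb).mono hSb)]
  refine setLIntegral_congr_fun hS fun z hz => ?_
  rw [← ENNReal.ofReal_mul (by positivity), ← mul_assoc, kern_mob hb (hn z hz), transplant]

/-! ### The weighted kernel estimate -/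

lemma kern_le {b u : ℂ} (hb : ‖b‖ < 1) (hu : ‖u‖ < 1) : kern b u ≤ 1 / (1 - ‖b‖) ^ 6 := by
  have hq : 0 < 1 - ‖b‖ := by linarith
  have h1 : 1 - ‖b‖ ≤ ‖1 - (starRingEnd ℂ) b * u‖ := by
    have h2 := norm_sub_norm_le (1 : ℂ) ((starRingEnd ℂ) b * u)
    rw [norm_one, norm_mul, RCLike.norm_conj] at h2
    nlinarith [norm_nonneg b]
  have h3 : (1 - ‖b‖ ^ 2) ^ 4 ≤ 1 :=
    pow_le_one₀ (by nlinarith [norm_nonneg b]) (by nlinarith [norm_nonneg b])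
  unfold kern
  gcongr

lemma one_sub_norm_mob_le {b z : ℂ} (hb : ‖b‖ < 1) (hz : ‖z‖ < 1) :
    1 - ‖mob b z‖ ≤ 2 / (1 - ‖b‖) ^ 2 * (1 - ‖z‖) := by
  have hq : 0 < 1 - ‖b‖ := by linarith
  have h1 : 1 - ‖b‖ ≤ ‖1 + (starRingEnd ℂ) b * z‖ := by
    have h2 := norm_sub_norm_le (1 : ℂ) (-((starRingEnd ℂ) b * z))
    rw [norm_one, norm_neg, norm_mul, RCLike.norm_conj, sub_neg_eq_add] at h2
    nlinarith [norm_nonneg b]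
  have h2 := mob_norm_identity (mob_den_ne hb hz)
  have h3 := mob_mem hb hz
  have h4 : (1 - ‖b‖) ^ 2 ≤ ‖1 + (starRingEnd ℂ) b * z‖ ^ 2 := by gcongr
  have h5 : (1 - ‖mob b z‖) ≤ 1 - ‖mob b z‖ ^ 2 := by nlinarith [norm_nonneg (mob b z)]
  have h6 : (1 - ‖b‖ ^ 2) * (1 - ‖z‖ ^ 2) ≤ 2 * (1 - ‖z‖) := by
    have e1 : 1 - ‖b‖ ^ 2 ≤ 1 := by nlinarith [norm_nonneg b]
    have e2 : 0 ≤ 1 - ‖z‖ ^ 2 := by nlinarith [norm_nonneg z]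
    have e3 : 1 - ‖z‖ ^ 2 ≤ 2 * (1 - ‖z‖) := by nlinarith [norm_nonneg z]
    nlinarith
  rw [div_mul_eq_mul_div, le_div_iff₀ (by positivity)]
  have h7 : 0 ≤ 1 - ‖mob b z‖ := by linarith
  nlinarith

lemma continuousOn_transplant {w : ℂ → ℝ} (hw : ContinuousOn w (ball 0 1)) {b : ℂ}
    (hb : ‖b‖ < 1) : ContinuousOn (transplant b w) (ball 0 1) := by
  have h1 : ContinuousOn (mob b) (ball 0 1) := fun z hz =>
    (hasDerivAt_mob (mob_den_ne hb (by simpa using hz))).continuousAt.continuousWithinAt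
  refine ContinuousOn.mul (by fun_prop) (hw.comp h1 fun z hz => ?_)
  simpa using mob_mem hb (by simpa using hz)

lemma transplant_nonneg {w : ℂ → ℝ} (hw0 : ∀ z ∈ ball (0 : ℂ) 1, 0 ≤ w z) {b : ℂ}
    (hb : ‖b‖ < 1) : ∀ z ∈ ball (0 : ℂ) 1, 0 ≤ transplant b w z := fun z hz =>
  mul_nonneg (by positivity) (hw0 _ (by simpa using mob_mem hb (by simpa using hz)))

/-- The circle integrals of the transplanted weight come close to zero near the boundary. Only
the circle integrals of `w` itself are assumed to vanish at the boundary; the transplanted circles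
are not concentric, and the comparison is made between areas of thin annuli. -/
lemma exists_ringInt_transplant_le {w : ℂ → ℝ} (hw : ContinuousOn w (ball 0 1))
    (hw0 : ∀ z ∈ ball (0 : ℂ) 1, 0 ≤ w z) (hbd : Tendsto (ringInt w) (𝓝[<] 1) (𝓝 0))
    {b : ℂ} (hb : ‖b‖ < 1) {a δ : ℝ} (ha : a < 1) (hδ : 0 < δ) :
    ∃ r ∈ Set.Ioo a 1, ringInt (transplant b w) r ≤ δ := by
  by_contra! hcon
  set q := 1 - ‖b‖ with hq
  have hq0 : 0 < q := by linarith
  set D := 2 / q ^ 2 with hD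
  have hD0 : 0 < D := by positivity
  -- the value of `η` makes the upper bound half of the lower bound
  set η := δ * q ^ 8 / 8 with hη
  have hη0 : 0 < η := by positivity
  obtain ⟨a₁, ha₁, h₁⟩ := (mem_nhdsLT_iff_exists_Ioo_subset).1
    (hbd.eventually (gt_mem_nhds hη0))
  set a₂ := max a₁ 0 with ha₂
  have ha₂1 : a₂ < 1 := max_lt ha₁ one_pos
  -- `mob b` maps the annulus `a' < |z| < 1` into an annulus on which `ringInt w < η`
  set a' := max (max a (1 / 2)) (1 - (1 - a₂) / D) with ha'
  have ha'1 : a' < 1 := by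
    refine max_lt (max_lt ha (by norm_num)) ?_
    have : 0 < (1 - a₂) / D := div_pos (by linarith) hD0
    linarith
  have hale : a ≤ a' := (le_max_left _ _).trans (le_max_left _ _)
  have hhalf : 1 / 2 ≤ a' := (le_max_right _ _).trans (le_max_left _ _)
  have ha'' : a₂ ≤ 1 - D * (1 - a') := by
    have : 1 - (1 - a₂) / D ≤ a' := le_max_right _ _
    have h : 1 - a' ≤ (1 - a₂) / D := by linarith
    rw [le_div_iff₀ hD0] at h
    linarith
  have ha₂0 : 0 ≤ a₂ := le_max_right _ _
  set S : Set ℂ := {z : ℂ | ‖z‖ ∈ Set.Ioo a' 1} with hS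
  set T : Set ℂ := {z : ℂ | ‖z‖ ∈ Set.Ioo (1 - D * (1 - a')) 1} with hT
  have hSm : MeasurableSet S := (isOpen_Ioo.preimage continuous_norm).measurableSet
  have hTm : MeasurableSet T := (isOpen_Ioo.preimage continuous_norm).measurableSet
  have hSb : S ⊆ ball 0 1 := fun z hz => by simpa using hz.2
  have hlow : ENNReal.ofReal (δ / 2) * ENNReal.ofReal (1 - a')
      ≤ ∫⁻ z in S, ENNReal.ofReal (transplant b w z) := by
    rw [lintegral_polar (continuousOn_transplant hw hb) (transplant_nonneg hw0 hb) (by linarith)]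
    calc _ = ∫⁻ r in Set.Ioo a' 1, ENNReal.ofReal (δ / 2) := by simp
      _ ≤ _ := by
        refine setLIntegral_mono' measurableSet_Ioo fun r hr => ENNReal.ofReal_le_ofReal ?_
        have := hcon r ⟨hale.trans_lt hr.1, hr.2⟩
        nlinarith [hr.1]
  have hup : ∫⁻ z in S, ENNReal.ofReal (transplant b w z)
      ≤ ENNReal.ofReal (1 / q ^ 6) * (ENNReal.ofReal η * ENNReal.ofReal (D * (1 - a'))) := by
    rw [lintegral_transplant hb hSm hSb]
    calc _ ≤ ∫⁻ u in T, ENNReal.ofReal (kern b u * w u) := by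
          refine lintegral_mono_set ?_
          rintro _ ⟨z, hz, rfl⟩
          have hz1 : ‖z‖ < 1 := hz.2
          refine ⟨?_, mob_mem hb hz1⟩
          have e1 := one_sub_norm_mob_le hb hz1
          have e2 : D * (1 - ‖z‖) < D * (1 - a') := by
            have := hz.1
            gcongr
          linarith
      _ ≤ ∫⁻ u in T, ENNReal.ofReal (1 / q ^ 6) * ENNReal.ofReal (w u) := by
          refine setLIntegral_mono' hTm fun u hu => ?_
          rw [← ENNReal.ofReal_mul (by positivity)]
          refine ENNReal.ofReal_le_ofReal ?_
          exact mul_le_mul_of_nonneg_right (kern_le hb hu.2) (hw0 u (by simpa using hu.2))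
      _ = ENNReal.ofReal (1 / q ^ 6) * ∫⁻ u in T, ENNReal.ofReal (w u) :=
          lintegral_const_mul' _ _ ENNReal.ofReal_ne_top
      _ ≤ _ := by
          gcongr
          rw [lintegral_polar hw hw0 (by linarith)]
          calc _ ≤ ∫⁻ r in Set.Ioo (1 - D * (1 - a')) 1, ENNReal.ofReal η := by
                refine setLIntegral_mono' measurableSet_Ioo fun r hr =>
                  ENNReal.ofReal_le_ofReal ?_
                have e : ringInt w r < η := h₁ ⟨(le_max_left a₁ 0).trans_lt
                  (ha''.trans_lt hr.1), hr.2⟩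
                have : 0 < r := ha₂0.trans_lt (ha''.trans_lt hr.1)
                nlinarith [hr.2]
            _ = _ := by simp
  have := hlow.trans hup
  rw [← ENNReal.ofReal_mul (by positivity), ← ENNReal.ofReal_mul (by positivity),
    ← ENNReal.ofReal_mul (by positivity), ENNReal.ofReal_le_ofReal_iff
      (by have : 0 < 1 - a' := by linarith
          positivity)] at this
  have e : 1 / q ^ 6 * (η * (D * (1 - a'))) = δ / 4 * (1 - a') := by
    rw [hη, hD]; field_simp; ring
  rw [e] at this
  nlinarith

/-- The circle integrals of the transplanted weight are at most the value at the centre: as a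
function of the squared radius they are convex, and they come arbitrarily close to zero at `1`. -/
lemma ringInt_transplant_le {w : ℂ → ℝ} (hw : ∀ z, ‖z‖ < 1 → ContDiffAt ℝ 4 w z)
    (hsbh : ∀ z, ‖z‖ < 1 → 0 ≤ lap (lap w) z)
    (hwp : ∀ z ∈ ball (0 : ℂ) 1, 0 < w z) (hbd : Tendsto (ringInt w) (𝓝[<] 1) (𝓝 0))
    {b : ℂ} (hb : ‖b‖ < 1) {r : ℝ} (hr : r ∈ Set.Ico (0 : ℝ) 1) :
    ringInt (transplant b w) r ≤ 2 * π * w b := by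
  have hwc : ContinuousOn w (ball 0 1) := fun z hz =>
    (hw z (by simpa using hz)).continuousAt.continuousWithinAt
  have hwb : 0 < w b := hwp b (by simpa using hb)
  have h0 : ringInt (transplant b w) 0 = 2 * π * w b := by
    simp [ringInt, pt, transplant, mob]
  obtain ⟨ρ, hρ, hle⟩ := exists_ringInt_transplant_le hwc (fun z hz => (hwp z hz).le) hbd hb
    hr.2 (show 0 < 2 * π * w b by positivity)
  have hρ0 : 0 ≤ ρ := hr.1.trans hρ.1.le
  have hconv := convexOn_transplant hw hsbh hb
  have hseg : r ^ 2 ∈ segment ℝ 0 (ρ ^ 2) := by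
    rw [segment_eq_Icc (by positivity)]
    exact ⟨by positivity, by have := hρ.1.le; have := hr.1; gcongr⟩
  have := hconv.le_on_segment (x := 0) (y := ρ ^ 2) ⟨le_rfl, one_pos⟩
    ⟨by positivity, by nlinarith [hρ.2]⟩ hseg
  simp only [Real.sqrt_sq hr.1, Real.sqrt_sq hρ0, Real.sqrt_zero, h0] at this
  exact this.trans (max_le le_rfl hle)

lemma ball_ae_eq : (ball (0 : ℂ) 1 : Set ℂ) =ᵐ[volume] {z : ℂ | ‖z‖ ∈ Set.Ioo 0 1} := by
  have : {z : ℂ | ‖z‖ ∈ Set.Ioo 0 1} = ball (0 : ℂ) 1 \ {0} := by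
    ext z; simp [and_comm]
  rw [this]
  exact (sdiff_ae_eq_self.2 (measure_mono_null Set.inter_subset_right (by simp))).symm

/-- The weighted kernel estimate, which bounds a weighted area mean of `w` by the value `w b`. -/
lemma lintegral_kern_le {w : ℂ → ℝ} (hw : ∀ z, ‖z‖ < 1 → ContDiffAt ℝ 4 w z)
    (hsbh : ∀ z, ‖z‖ < 1 → 0 ≤ lap (lap w) z)
    (hwp : ∀ z ∈ ball (0 : ℂ) 1, 0 < w z) (hbd : Tendsto (ringInt w) (𝓝[<] 1) (𝓝 0))
    {b : ℂ} (hb : ‖b‖ < 1) :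
    ∫⁻ u in ball 0 1, ENNReal.ofReal (kern b u * w u) ≤ ENNReal.ofReal (2 * π * w b) := by
  have hwc : ContinuousOn w (ball 0 1) := fun z hz =>
    (hw z (by simpa using hz)).continuousAt.continuousWithinAt
  have hwb : 0 < w b := hwp b (by simpa using hb)
  have hw0 : ∀ z ∈ ball (0 : ℂ) 1, 0 ≤ w z := fun z hz => (hwp z hz).le
  calc _ ≤ ∫⁻ u in mob b '' ball 0 1, ENNReal.ofReal (kern b u * w u) :=
        lintegral_mono_set (mob_image hb)
    _ = ∫⁻ z in ball 0 1, ENNReal.ofReal (transplant b w z) :=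
        (lintegral_transplant hb measurableSet_ball subset_rfl).symm
    _ = ∫⁻ r in Set.Ioo 0 1, ENNReal.ofReal (r * ringInt (transplant b w) r) := by
        rw [setLIntegral_congr ball_ae_eq, lintegral_polar (continuousOn_transplant hwc hb)
          (transplant_nonneg hw0 hb) le_rfl]
    _ ≤ ∫⁻ r in Set.Ioo (0 : ℝ) 1, ENNReal.ofReal (2 * π * w b) := by
        refine setLIntegral_mono' measurableSet_Ioo fun r hr => ENNReal.ofReal_le_ofReal ?_
        have h1 := ringInt_transplant_le hw hsbh hwp hbd hb ⟨hr.1.le, hr.2⟩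
        have h2 : 0 < 2 * π * w b := by positivity
        nlinarith [hr.1, hr.2]
    _ = _ := by simp

/-! ### The sub-mean value property and dilates -/

/-- The sub-mean value property of `‖g‖ ^ p` on circles, from Jensen's formula for `log ‖g‖` and
the convexity of `exp`. -/
lemma submean_circle {g : ℂ → ℂ} (hg : DifferentiableOn ℂ g (ball 0 1)) {p : ℝ} (hp : 0 < p)
    {r : ℝ} (hr : r ∈ Set.Ioo (0 : ℝ) 1) :
    2 * π * ‖g 0‖ ^ p ≤ ringInt (fun z => ‖g z‖ ^ p) r := by
  have hr0 : r ≠ 0 := hr.1.ne'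
  by_cases h0 : g 0 = 0
  · rw [h0, norm_zero, Real.zero_rpow hp.ne', mul_zero]
    exact intervalIntegral.integral_nonneg (by positivity) fun θ _ => by positivity
  have habs : |r| = r := abs_of_pos hr.1
  have han : AnalyticOnNhd ℂ g (closedBall 0 |r|) :=
    (hg.analyticOnNhd isOpen_ball).mono (closedBall_subset_ball (by rw [habs]; exact hr.2))
  have hans : AnalyticOnNhd ℂ g (sphere 0 |r|) := han.mono sphere_subset_closedBall
  have hci : CircleIntegrable (fun z => Real.log ‖g z‖) 0 r :=
    hans.meromorphicOn.circleIntegrable_log_norm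
  have hjensen : Real.log ‖g 0‖ ≤ Real.circleAverage (fun z => Real.log ‖g z‖) 0 r := by
    rw [han.circleAverage_log_norm hr0 h0, le_add_iff_nonneg_left]
    refine finsum_nonneg fun u => ?_
    by_cases hu : u ∈ closedBall (0 : ℂ) |r|
    · refine mul_nonneg ?_ ?_
      · exact_mod_cast MeromorphicOn.AnalyticOnNhd.divisor_nonneg han u
      · rw [zero_sub, norm_neg]
        rcases eq_or_ne u 0 with rfl | hu0
        · simp
        · refine Real.log_nonneg ?_
          rw [← div_eq_mul_inv, one_le_div (norm_pos_iff.2 hu0)]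
          simpa [habs] using hu
    · simp [Function.locallyFinsuppWithin.apply_eq_zero_of_notMem _ hu]
  set A : ℝ := ‖g 0‖ ^ p with hA
  have hA0 : 0 < A := Real.rpow_pos_of_pos (norm_pos_iff.2 h0) p
  have hAe : A = Real.exp (p * Real.log ‖g 0‖) := by
    rw [hA, Real.rpow_def_of_pos (norm_pos_iff.2 h0), mul_comm]
  have hcont : ContinuousOn (fun z => ‖g z‖ ^ p) (sphere 0 |r|) := by
    refine ContinuousOn.rpow_const ?_ fun _ _ => Or.inr hp.le
    exact hans.continuousOn.norm
  have hcode : (fun z => ‖g z‖ ^ p) =ᶠ[codiscreteWithin (sphere 0 |r|)]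
      fun z => Real.exp (p * Real.log ‖g z‖) := by
    have := han.preimage_zero_mem_codiscreteWithin h0 (by simp)
      ((convex_closedBall (0 : ℂ) |r|).isConnected (by simp))
    refine Filter.codiscreteWithin_mono sphere_subset_closedBall ?_
    filter_upwards [this] with z hz
    rw [Real.rpow_def_of_pos (norm_pos_iff.2 hz), mul_comm]
  have hint1 : CircleIntegrable (fun z => ‖g z‖ ^ p) 0 r :=
    hcont.circleIntegrable'
  have hint2 : CircleIntegrable (fun z => Real.exp (p * Real.log ‖g z‖)) 0 r :=
    hint1.congr_codiscreteWithin hcode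
  have hint3 : CircleIntegrable (fun z => (A * p) • Real.log ‖g z‖) 0 r := hci.const_smul
  have key : A ≤ Real.circleAverage (fun z => ‖g z‖ ^ p) 0 r := by
    rw [Real.circleAverage_congr_codiscreteWithin hcode hr0]
    have h1 : Real.circleAverage (fun z => A * (1 - p * Real.log ‖g 0‖)
        + (A * p) • Real.log ‖g z‖) 0 r ≤ _ :=
      Real.circleAverage_mono ((circleIntegrable_const _ _ _).add hint3) hint2 fun z _ => by
        -- the tangent line of `exp` at `log A`
        have := Real.add_one_le_exp (p * Real.log ‖g z‖ - p * Real.log ‖g 0‖)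
        rw [Real.exp_sub, ← hAe, le_div_iff₀ hA0] at this
        simp only [smul_eq_mul]
        linarith
    refine le_trans ?_ h1
    rw [Real.circleAverage_fun_add (circleIntegrable_const _ _ _) hint3,
      Real.circleAverage_const, Real.circleAverage_fun_smul, smul_eq_mul]
    have : 0 ≤ A * p := by positivity
    nlinarith
  rw [Real.circleAverage_def, smul_eq_mul, inv_mul_eq_div, le_div_iff₀ (by positivity)] at key
  have e : ringInt (fun z => ‖g z‖ ^ p) r = ∫ θ in (0 : ℝ)..(2 * π), ‖g (circleMap 0 r θ)‖ ^ p := by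
    unfold ringInt pt circleMap
    simp
  rw [e]; linarith

/-- A sub-mean value inequality on the unit disc, with a non-optimal constant. -/
lemma submean_disc {g : ℂ → ℂ} (hg : DifferentiableOn ℂ g (ball 0 1)) {p : ℝ} (hp : 0 < p) :
    ENNReal.ofReal (‖g 0‖ ^ p) ≤ ∫⁻ z in ball 0 1, ENNReal.ofReal (‖g z‖ ^ p) := by
  have hc : ContinuousOn (fun z => ‖g z‖ ^ p) (ball 0 1) :=
    hg.continuousOn.norm.rpow_const fun _ _ => Or.inr hp.le
  rw [setLIntegral_congr ball_ae_eq, lintegral_polar hc (fun z _ => by positivity) le_rfl]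
  calc _ ≤ ENNReal.ofReal (2 * ‖g 0‖ ^ p) * ENNReal.ofReal (1 - 1 / 2) := by
        rw [← ENNReal.ofReal_mul (by positivity)]
        exact ENNReal.ofReal_le_ofReal (by linarith)
    _ = ∫⁻ r in Set.Ioo (1 / 2 : ℝ) 1, ENNReal.ofReal (2 * ‖g 0‖ ^ p) := by
        rw [setLIntegral_const, Real.volume_Ioo]
    _ ≤ ∫⁻ r in Set.Ioo (1 / 2 : ℝ) 1, ENNReal.ofReal (r * ringInt (fun z => ‖g z‖ ^ p) r) := by
        refine setLIntegral_mono' measurableSet_Ioo fun r hr => ENNReal.ofReal_le_ofReal ?_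
        have hr0 : (0 : ℝ) < r := by linarith [hr.1]
        have h1 := submean_circle hg hp ⟨hr0, hr.2⟩
        have h2 : 0 ≤ ‖g 0‖ ^ p := by positivity
        have h3 : 4 * ‖g 0‖ ^ p ≤ ringInt (fun z => ‖g z‖ ^ p) r := by
          nlinarith [Real.pi_gt_three]
        nlinarith [hr.1]
    _ ≤ _ := lintegral_mono_set (Set.Ioo_subset_Ioo_left (by norm_num))

lemma submean_ball {f : ℂ → ℂ} (hf : DifferentiableOn ℂ f (ball 0 1)) {p : ℝ} (hp : 0 < p)
    {c : ℂ} {ρ : ℝ} (hρ : 0 < ρ) (hc : ball c ρ ⊆ ball 0 1) :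
    ENNReal.ofReal (ρ ^ 2 * ‖f c‖ ^ p) ≤ ∫⁻ z in ball c ρ, ENNReal.ofReal (‖f z‖ ^ p) := by
  have hmaps : ∀ z ∈ ball (0 : ℂ) 1, c + ρ * z ∈ ball c ρ := by
    intro z hz
    have : ‖z‖ < 1 := by simpa using hz
    rw [mem_ball, dist_eq_norm, add_sub_cancel_left, norm_mul, Complex.norm_real,
      Real.norm_eq_abs, abs_of_pos hρ]
    nlinarith
  have hg : DifferentiableOn ℂ (fun z => f (c + ρ * z)) (ball 0 1) :=
    hf.comp (by fun_prop) fun z hz => hc (hmaps z hz)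
  have h1 := submean_disc hg hp
  simp only [mul_zero, add_zero] at h1
  have himg : (fun z : ℂ => c + ρ * z) '' ball 0 1 ⊆ ball c ρ := by
    rintro _ ⟨z, hz, rfl⟩; exact hmaps z hz
  refine le_trans ?_ (lintegral_mono_set himg)
  rw [lintegral_image_holo measurableSet_ball (φ' := fun _ => (ρ : ℂ)) (fun z _ => by
    simpa using ((hasDerivAt_id z).const_mul (ρ : ℂ)).const_add c) ?_]
  · rw [lintegral_const_mul' _ _ ENNReal.ofReal_ne_top, ENNReal.ofReal_mul (by positivity)]
    simp only [Complex.norm_real, Real.norm_eq_abs, sq_abs]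
    gcongr
  · intro x _ y _ hxy
    have : (ρ : ℂ) ≠ 0 := by exact_mod_cast hρ.ne'
    simpa [this] using hxy

/-- The dilates of `f` are dominated by the kernel integral of `‖f‖ ^ p`, uniformly in the
dilation parameter. The sub-mean value property is used on the disc of radius `(1 - r |u|) / 2`
about `r u`, where the kernel is comparable to the reciprocal of the area. -/
lemma dilate_le {f : ℂ → ℂ} (hf : DifferentiableOn ℂ f (ball 0 1)) {p : ℝ} (hp : 0 < p)
    {r : ℝ} (hr : r ∈ Set.Icc (0 : ℝ) 1) {u : ℂ} (hu : ‖u‖ < 1) :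
    ENNReal.ofReal (‖f (r * u)‖ ^ p)
      ≤ 16000 * ∫⁻ b in ball 0 1, ENNReal.ofReal (‖f b‖ ^ p * kern b u) := by
  set τ : ℝ := 1 - r * ‖u‖ with hτ
  have hru : r * ‖u‖ ≤ ‖u‖ := mul_le_of_le_one_left (norm_nonneg u) hr.2
  have hτ0 : 0 < τ := by linarith
  have hnc : ‖(r : ℂ) * u‖ = r * ‖u‖ := by
    rw [norm_mul, Complex.norm_real, Real.norm_eq_abs, abs_of_nonneg hr.1]
  have hb1 : ∀ b ∈ ball ((r : ℂ) * u) (τ / 2), ‖b‖ ≤ 1 - τ / 2 := by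
    intro b hb
    rw [mem_ball, dist_eq_norm] at hb
    have := norm_le_norm_add_norm_sub' b ((r : ℂ) * u)
    linarith
  have hsub : ball ((r : ℂ) * u) (τ / 2) ⊆ ball 0 1 := fun b hb => by
    have := hb1 b hb
    simp only [mem_ball, dist_zero_right]; linarith
  have hkern : ∀ b ∈ ball ((r : ℂ) * u) (τ / 2), 1 / (4000 * τ ^ 2) ≤ kern b u := by
    intro b hb
    have h1 := hb1 b hb
    have h2 : τ / 2 ≤ 1 - ‖b‖ ^ 2 := by nlinarith [norm_nonneg b]
    have h3 : ‖1 - (starRingEnd ℂ) b * u‖ ≤ 5 / 2 * τ := by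
      have e : 1 - (starRingEnd ℂ) b * u
          = ((1 - r * ‖u‖ ^ 2 : ℝ) : ℂ) - (starRingEnd ℂ) (b - r * u) * u := by
        have : ((‖u‖ ^ 2 : ℝ) : ℂ) = u * (starRingEnd ℂ) u := by
          rw [Complex.mul_conj, Complex.normSq_eq_norm_sq]
        rw [Complex.ofReal_sub, Complex.ofReal_mul, this]
        simp only [map_sub, map_mul, Complex.conj_ofReal, Complex.ofReal_one]
        ring
      rw [e]
      refine (norm_sub_le _ _).trans ?_
      rw [Complex.norm_real, norm_mul, RCLike.norm_conj, Real.norm_eq_abs]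
      rw [mem_ball, dist_eq_norm] at hb
      have e1 : 0 ≤ 1 - r * ‖u‖ ^ 2 := by nlinarith [norm_nonneg u]
      have e2 : 1 - r * ‖u‖ ^ 2 ≤ 2 * τ := by
        have : 0 ≤ r * ‖u‖ := mul_nonneg hr.1 (norm_nonneg u)
        nlinarith [norm_nonneg u]
      have e3 : ‖b - r * u‖ * ‖u‖ ≤ τ / 2 := by nlinarith [norm_nonneg u, norm_nonneg (b - r * u)]
      rw [abs_of_nonneg e1]; linarith
    have h4 : 0 < ‖1 - (starRingEnd ℂ) b * u‖ := by
      rw [norm_pos_iff]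
      have := mob_den_ne (b := -b) (z := u) (by rw [norm_neg]; linarith) hu
      simpa [sub_eq_add_neg] using this
    calc 1 / (4000 * τ ^ 2) ≤ (τ / 2) ^ 4 / (5 / 2 * τ) ^ 6 := by
          rw [div_le_div_iff₀ (by positivity) (by positivity)]
          have : 0 < τ ^ 6 := by positivity
          nlinarith
      _ ≤ kern b u := by unfold kern; gcongr
  have h1 := submean_ball hf hp (half_pos hτ0) hsub
  have h2 : ENNReal.ofReal (‖f (r * u)‖ ^ p)
      = ENNReal.ofReal (4 / τ ^ 2) * ENNReal.ofReal ((τ / 2) ^ 2 * ‖f (r * u)‖ ^ p) := by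
    rw [← ENNReal.ofReal_mul (by positivity)]
    congr 1; field_simp; norm_num
  rw [h2]
  calc _ ≤ ENNReal.ofReal (4 / τ ^ 2)
          * ∫⁻ z in ball ((r : ℂ) * u) (τ / 2), ENNReal.ofReal (‖f z‖ ^ p) := by gcongr
    _ ≤ ENNReal.ofReal (4 / τ ^ 2) * ∫⁻ z in ball ((r : ℂ) * u) (τ / 2),
          ENNReal.ofReal (4000 * τ ^ 2) * ENNReal.ofReal (‖f z‖ ^ p * kern z u) := by
        refine mul_le_mul_right (setLIntegral_mono' measurableSet_ball fun b hb => ?_) _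
        rw [← ENNReal.ofReal_mul (by positivity)]
        refine ENNReal.ofReal_le_ofReal ?_
        have := hkern b hb
        rw [div_le_iff₀ (by positivity)] at this
        have h3 : 0 ≤ ‖f b‖ ^ p := by positivity
        nlinarith
    _ = 16000 * ∫⁻ z in ball ((r : ℂ) * u) (τ / 2), ENNReal.ofReal (‖f z‖ ^ p * kern z u) := by
        rw [lintegral_const_mul' _ _ ENNReal.ofReal_ne_top, ← mul_assoc,
          ← ENNReal.ofReal_mul (by positivity)]
        congr 1
        rw [show 4 / τ ^ 2 * (4000 * τ ^ 2) = 16000 by field_simp; norm_num]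
        norm_num
    _ ≤ _ := by gcongr

/-! ### Approximation by dilates and Taylor polynomials -/

lemma norm_add_rpow_le {p : ℝ} (hp : 0 < p) (a b : ℂ) :
    ‖a + b‖ ^ p ≤ 2 ^ p * (‖a‖ ^ p + ‖b‖ ^ p) := by
  have h1 : ‖a + b‖ ≤ 2 * max ‖a‖ ‖b‖ := by
    have := norm_add_le a b
    have := le_max_left ‖a‖ ‖b‖
    have := le_max_right ‖a‖ ‖b‖
    linarith
  have h2 : (max ‖a‖ ‖b‖) ^ p ≤ ‖a‖ ^ p + ‖b‖ ^ p := by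
    have ha : 0 ≤ ‖a‖ ^ p := by positivity
    have hb : 0 ≤ ‖b‖ ^ p := by positivity
    rcases max_choice ‖a‖ ‖b‖ with h | h <;> rw [h] <;> linarith
  calc ‖a + b‖ ^ p ≤ (2 * max ‖a‖ ‖b‖) ^ p := Real.rpow_le_rpow (norm_nonneg _) h1 hp.le
    _ = 2 ^ p * (max ‖a‖ ‖b‖) ^ p := Real.mul_rpow (by norm_num) (by positivity)
    _ ≤ _ := by gcongr

/-- A multiple of the kernel integral of `‖f‖ ^ p`, dominating all dilates of `f`. -/
noncomputable def majorant (f : ℂ → ℂ) (p : ℝ) (u : ℂ) : ENNReal :=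
  16000 * ∫⁻ b in ball 0 1, ENNReal.ofReal (‖f b‖ ^ p * kern b u)

/-- The majorant is integrable against the weight, by Tonelli's theorem and the weighted kernel
estimate. -/
lemma lintegral_majorant_ne_top {w : ℂ → ℝ} (hw : ContinuousOn w (ball 0 1))
    (hk : ∀ b ∈ ball (0 : ℂ) 1,
      ∫⁻ u in ball 0 1, ENNReal.ofReal (kern b u * w u) ≤ ENNReal.ofReal (2 * π * w b))
    {p : ℝ} {f : ℂ → ℂ} (hf : ContinuousOn f (ball 0 1))
    (hfp : IntegrableOn (fun z => ‖f z‖ ^ p * w z) (ball (0 : ℂ) 1)) :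
    ∫⁻ u in ball 0 1, majorant f p u * ENNReal.ofReal (w u) ≠ ⊤ := by
  have hfm : AEMeasurable f (volume.restrict (ball 0 1)) := hf.aemeasurable measurableSet_ball
  have hwm : AEMeasurable w (volume.restrict (ball 0 1)) := hw.aemeasurable measurableSet_ball
  have hkm : Measurable (fun x : ℂ × ℂ => kern x.2 x.1) := by
    unfold kern
    fun_prop
  have hfm2 : AEMeasurable (fun x : ℂ × ℂ => f x.2)
      ((volume.restrict (ball 0 1)).prod (volume.restrict (ball 0 1))) := hfm.comp_snd
  have hwm2 : AEMeasurable (fun x : ℂ × ℂ => w x.1)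
      ((volume.restrict (ball 0 1)).prod (volume.restrict (ball 0 1))) := hwm.comp_fst
  have hjoint : AEMeasurable (fun x : ℂ × ℂ =>
      ENNReal.ofReal (‖f x.2‖ ^ p * kern x.2 x.1) * ENNReal.ofReal (w x.1))
      ((volume.restrict (ball 0 1)).prod (volume.restrict (ball 0 1))) :=
    ((hfm2.norm.pow_const p).mul hkm.aemeasurable).ennreal_ofReal.mul hwm2.ennreal_ofReal
  have e1 : ∫⁻ u in ball 0 1, majorant f p u * ENNReal.ofReal (w u)
      = 16000 * ∫⁻ u in ball 0 1, ∫⁻ b in ball 0 1,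
        ENNReal.ofReal (‖f b‖ ^ p * kern b u) * ENNReal.ofReal (w u) := by
    rw [← lintegral_const_mul' _ _ (by norm_num)]
    refine lintegral_congr fun u => ?_
    rw [lintegral_mul_const' _ _ ENNReal.ofReal_ne_top, majorant, mul_assoc]
  rw [e1, lintegral_lintegral_swap hjoint]
  refine ENNReal.mul_ne_top (by norm_num) (ne_of_lt ?_)
  calc _ ≤ ∫⁻ b in ball 0 1, ENNReal.ofReal (2 * π) * ENNReal.ofReal (‖f b‖ ^ p * w b) := by
        refine setLIntegral_mono' measurableSet_ball fun b hb => ?_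
        have hfb : 0 ≤ ‖f b‖ ^ p := by positivity
        calc _ = ∫⁻ u in ball 0 1, ENNReal.ofReal (‖f b‖ ^ p) * ENNReal.ofReal (kern b u * w u) := by
              refine lintegral_congr fun u => ?_
              rw [ENNReal.ofReal_mul hfb, ENNReal.ofReal_mul (kern_nonneg b u), mul_assoc]
          _ = ENNReal.ofReal (‖f b‖ ^ p) * ∫⁻ u in ball 0 1, ENNReal.ofReal (kern b u * w u) :=
              lintegral_const_mul' _ _ ENNReal.ofReal_ne_top
          _ ≤ ENNReal.ofReal (‖f b‖ ^ p) * ENNReal.ofReal (2 * π * w b) := by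
              gcongr; exact hk b hb
          _ = _ := by
              rw [← ENNReal.ofReal_mul hfb, ← ENNReal.ofReal_mul (by positivity)]
              congr 1; ring
    _ = ENNReal.ofReal (2 * π) * ∫⁻ b in ball 0 1, ENNReal.ofReal (‖f b‖ ^ p * w b) :=
        lintegral_const_mul' _ _ ENNReal.ofReal_ne_top
    _ < ⊤ := by
        refine ENNReal.mul_lt_top ENNReal.ofReal_lt_top ?_
        refine lt_of_le_of_lt (lintegral_mono fun b => ?_) hfp.hasFiniteIntegral
        exact Real.ofReal_le_enorm _

/-- Dilates of `f` converge to `f` in the weighted space. -/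
lemma exists_dilate_close {w : ℂ → ℝ} (hw : ContinuousOn w (ball 0 1))
    (hw0 : ∀ z ∈ ball (0 : ℂ) 1, 0 ≤ w z) {p : ℝ} (hp : 0 < p) {f : ℂ → ℂ}
    (hf : DifferentiableOn ℂ f (ball 0 1))
    (hmaj : ∫⁻ u in ball 0 1, majorant f p u * ENNReal.ofReal (w u) ≠ ⊤)
    {δ : ENNReal} (hδ : 0 < δ) :
    ∃ r ∈ Set.Ioo (0 : ℝ) 1,
      ∫⁻ u in ball 0 1, ENNReal.ofReal (‖f u - f (r * u)‖ ^ p * w u) < δ := by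
  set ρ : ℕ → ℝ := fun n => 1 - 1 / ((n : ℝ) + 2) with hρ
  have hρm : ∀ n, ρ n ∈ Set.Ioo (0 : ℝ) 1 := by
    intro n
    have h2 : (0 : ℝ) < (n : ℝ) + 2 := by positivity
    have h3 : 1 / ((n : ℝ) + 2) < 1 := by
      rw [div_lt_one h2]
      have : (0 : ℝ) ≤ n := Nat.cast_nonneg n
      linarith
    have h4 : 0 < 1 / ((n : ℝ) + 2) := by positivity
    exact ⟨by simp only [hρ]; linarith, by simp only [hρ]; linarith⟩
  have hρt : Tendsto ρ atTop (𝓝 1) := by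
    have h : Tendsto (fun n : ℕ => (n : ℝ) + 2) atTop atTop :=
      tendsto_natCast_atTop_atTop.atTop_add tendsto_const_nhds
    have := (tendsto_const_nhds (x := (1 : ℝ))).sub (h.inv_tendsto_atTop)
    simpa [hρ, one_div] using this
  have hmem : ∀ n, ∀ u ∈ ball (0 : ℂ) 1, (ρ n : ℂ) * u ∈ ball (0 : ℂ) 1 := by
    intro n u hu
    have h1 : ‖u‖ < 1 := by simpa using hu
    have h2 := hρm n
    simp only [mem_ball, dist_zero_right, norm_mul, Complex.norm_real, Real.norm_eq_abs,
      abs_of_pos h2.1]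
    nlinarith [norm_nonneg u, h2.1, h2.2]
  have hfc := hf.continuousOn
  have hlim : Tendsto (fun n => ∫⁻ u in ball 0 1,
      ENNReal.ofReal (‖f u - f (ρ n * u)‖ ^ p * w u)) atTop
      (𝓝 (∫⁻ u in ball (0 : ℂ) 1, 0)) := by
    refine tendsto_lintegral_of_dominated_convergence'
      (fun u => ENNReal.ofReal (2 ^ p) * (2 * (majorant f p u * ENNReal.ofReal (w u)))) ?_ ?_ ?_ ?_
    · intro n
      refine (ContinuousOn.aemeasurable ?_ measurableSet_ball).ennreal_ofReal
      refine ContinuousOn.mul (ContinuousOn.rpow_const ?_ fun _ _ => Or.inr hp.le) hw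
      exact (hfc.sub (hfc.comp (by fun_prop) (hmem n))).norm
    · intro n
      refine (ae_restrict_iff' measurableSet_ball).2 (ae_of_all _ fun u hu => ?_)
      have hu1 : ‖u‖ < 1 := by simpa using hu
      have d1 := dilate_le hf hp ⟨(hρm n).1.le, (hρm n).2.le⟩ hu1
      have d2 := dilate_le hf hp (r := 1) ⟨zero_le_one, le_rfl⟩ hu1
      rw [Complex.ofReal_one, one_mul] at d2
      have h1 := norm_add_rpow_le hp (f u) (-f (ρ n * u))
      rw [← sub_eq_add_neg, norm_neg] at h1
      have hw1 := hw0 u hu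
      calc ENNReal.ofReal (‖f u - f (ρ n * u)‖ ^ p * w u)
          ≤ ENNReal.ofReal (2 ^ p * (‖f u‖ ^ p + ‖f (ρ n * u)‖ ^ p) * w u) :=
            ENNReal.ofReal_le_ofReal (by gcongr)
        _ = ENNReal.ofReal (2 ^ p) * ((ENNReal.ofReal (‖f u‖ ^ p)
            + ENNReal.ofReal (‖f (ρ n * u)‖ ^ p)) * ENNReal.ofReal (w u)) := by
            rw [ENNReal.ofReal_mul (by positivity), ENNReal.ofReal_mul (by positivity),
              ENNReal.ofReal_add (by positivity) (by positivity), mul_assoc]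
        _ ≤ ENNReal.ofReal (2 ^ p) * ((majorant f p u + majorant f p u)
            * ENNReal.ofReal (w u)) := by
            gcongr
            · exact d2
            · exact d1
        _ = _ := by rw [← two_mul, mul_assoc]
    · rw [lintegral_const_mul' _ _ ENNReal.ofReal_ne_top, lintegral_const_mul' _ _ (by norm_num)]
      exact ENNReal.mul_ne_top ENNReal.ofReal_ne_top (ENNReal.mul_ne_top (by norm_num) hmaj)
    · refine (ae_restrict_iff' measurableSet_ball).2 (ae_of_all _ fun u hu => ?_)
      have hcu : ContinuousAt f u := hfc.continuousAt (isOpen_ball.mem_nhds hu)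
      have t1 : Tendsto (fun n => (ρ n : ℂ) * u) atTop (𝓝 u) := by
        have := ((Complex.continuous_ofReal.tendsto 1).comp hρt).mul_const u
        simpa using this
      have t2 : Tendsto (fun n => ‖f u - f (ρ n * u)‖) atTop (𝓝 0) := by
        have := ((tendsto_const_nhds (x := f u)).sub (hcu.tendsto.comp t1)).norm
        simpa using this
      have t3 : Tendsto (fun n => ‖f u - f (ρ n * u)‖ ^ p * w u) atTop (𝓝 0) := by
        have := (t2.rpow_const (Or.inr hp.le)).mul_const (w u)
        rwa [Real.zero_rpow hp.ne', zero_mul] at this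
      simpa using ENNReal.tendsto_ofReal t3
  rw [lintegral_zero] at hlim
  obtain ⟨n, hn⟩ := (hlim.eventually (gt_mem_nhds hδ)).exists
  exact ⟨ρ n, hρm n, hn⟩

/-- A dilate of `f` is a uniform limit of its Taylor polynomials on the unit disc. -/
lemma exists_polynomial_close {f : ℂ → ℂ} (hf : DifferentiableOn ℂ f (ball 0 1)) {r : ℝ}
    (hr : r ∈ Set.Ioo (0 : ℝ) 1) {η : ℝ} (hη : 0 < η) :
    ∃ Q : Polynomial ℂ, ∀ z ∈ ball (0 : ℂ) 1, ‖f (r * z) - Q.eval z‖ < η := by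
  set R : NNReal := ⟨(1 + r) / 2, by linarith [hr.1]⟩ with hR
  have hR1 : (R : ℝ) < 1 := by show (1 + r) / 2 < 1; linarith [hr.2]
  have hrR : r < R := by show r < (1 + r) / 2; linarith [hr.2]
  have hR0 : 0 < R := by exact_mod_cast hr.1.trans hrR
  have hfs := DifferentiableOn.hasFPowerSeriesOnBall
    (hf.mono (closedBall_subset_ball hR1)) hR0
  set P := cauchyPowerSeries f 0 R
  set r' : NNReal := ⟨r, hr.1.le⟩
  have hr' : (r' : ENNReal) < R := by
    rw [ENNReal.coe_lt_coe]; exact hrR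
  have hunif := hfs.tendstoUniformlyOn hr'
  rw [Metric.tendstoUniformlyOn_iff] at hunif
  obtain ⟨n, hn⟩ := (hunif η hη).exists
  refine ⟨∑ k ∈ Finset.range n, Polynomial.monomial k ((r : ℂ) ^ k * P.coeff k), fun z hz => ?_⟩
  have hz1 : ‖z‖ < 1 := by simpa using hz
  have hm : (r : ℂ) * z ∈ ball (0 : ℂ) r' := by
    simp only [mem_ball, dist_zero_right, norm_mul, Complex.norm_real, Real.norm_eq_abs,
      abs_of_pos hr.1]
    show r * ‖z‖ < r
    nlinarith [hr.1]
  have := hn _ hm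
  rw [zero_add, dist_eq_norm] at this
  have e : P.partialSum n ((r : ℂ) * z) = Polynomial.eval z
      (∑ k ∈ Finset.range n, Polynomial.monomial k ((r : ℂ) ^ k * P.coeff k)) := by
    rw [Polynomial.eval_finsetSum]
    refine Finset.sum_congr rfl fun k _ => ?_
    rw [FormalMultilinearSeries.apply_eq_pow_smul_coeff, Polynomial.eval_monomial, smul_eq_mul,
      mul_pow]
    ring
  rwa [e] at this

/-! ### Density of the polynomials -/

/-- If the positive integrable weight `w` on the unit disk is `C⁴` and
super-biharmonic (`Δ²w ≥ 0`) and `lim_{r→1⁻} ∫_𝕋 w(rζ) dσ(ζ) = 0`, then the analytic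
polynomials are dense in `A^p(𝔻, w dA)`. -/
theorem polynomials_dense_of_superbiharmonic
    (p : ℝ) (hp : 0 < p)
    (w : ℂ → ℝ)
    (hw_pos : ∀ z ∈ ball (0 : ℂ) 1, 0 < w z)
    (hw_int : IntegrableOn w (ball (0 : ℂ) 1))
    (hw_smooth : ContDiffOn ℝ 4 w (ball (0 : ℂ) 1))
    (hw_sbh : ∀ z ∈ ball (0 : ℂ) 1, 0 ≤ quarterLaplacian (quarterLaplacian w) z)
    (hw_bdry : Tendsto
      (fun r : ℝ => (2 * π)⁻¹ * ∫ θ in (0 : ℝ)..(2 * π), w ((r : ℂ) * Complex.exp (θ * Complex.I)))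
      (𝓝[<] (1 : ℝ)) (𝓝 0))
    (f : ℂ → ℂ) (hf : DifferentiableOn ℂ f (ball (0 : ℂ) 1))
    (hfp : IntegrableOn (fun z => ‖f z‖ ^ p * w z) (ball (0 : ℂ) 1)) :
    ∀ ε : ℝ, 0 < ε → ∃ Q : Polynomial ℂ,
      ∫ z in ball (0 : ℂ) 1, ‖f z - Q.eval z‖ ^ p * w z < ε ^ p := by
  intro ε hε
  have hw : ∀ z : ℂ, ‖z‖ < 1 → ContDiffAt ℝ 4 w z := fun z hz =>
    hw_smooth.contDiffAt (isOpen_ball.mem_nhds (by simpa using hz))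
  have hsbh : ∀ z : ℂ, ‖z‖ < 1 → 0 ≤ lap (lap w) z := by
    intro z hz
    have h := hw_sbh z (by simpa using hz)
    rw [quarterLaplacian_eq_lap (quarterLaplacian w), quarterLaplacian_eq_lap w] at h
    simp only [lap_const_mul (1 / 4) (contDiffAt_lap (m := 2) (hw z hz) (by norm_num))] at h
    linarith
  have hbd : Tendsto (ringInt w) (𝓝[<] 1) (𝓝 0) := by
    have h := hw_bdry.const_mul (2 * π)
    rw [mul_zero] at h
    refine h.congr fun r => ?_
    rw [mul_inv_cancel_left₀ (by positivity)]
    rfl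
  have hwc : ContinuousOn w (ball 0 1) := hw_smooth.continuousOn
  have hw0 : ∀ z ∈ ball (0 : ℂ) 1, 0 ≤ w z := fun z hz => (hw_pos z hz).le
  have hmaj := lintegral_majorant_ne_top hwc
    (fun b hb => lintegral_kern_le hw hsbh hw_pos hbd (by simpa using hb)) hf.continuousOn hfp
  set W : ℝ := ∫ z in ball (0 : ℂ) 1, w z with hW
  have hW0 : 0 ≤ W := setIntegral_nonneg measurableSet_ball hw0
  have hWl : ∫⁻ z in ball (0 : ℂ) 1, ENNReal.ofReal (w z) = ENNReal.ofReal W :=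
    (ofReal_integral_eq_lintegral_ofReal hw_int
      ((ae_restrict_iff' measurableSet_ball).2 (ae_of_all _ hw0))).symm
  have hεp : 0 < ε ^ p := Real.rpow_pos_of_pos hε p
  have h2p : (0 : ℝ) < 2 ^ p := by positivity
  obtain ⟨r, hr, hfr⟩ := exists_dilate_close hwc hw0 hp hf hmaj
    (δ := ENNReal.ofReal (ε ^ p / (2 ^ p * 4))) (ENNReal.ofReal_pos.2 (by positivity))
  -- `η` is chosen so that `2 ^ p * η ^ p * W ≤ ε ^ p / 4`
  set κ : ℝ := ε ^ p / (2 ^ p * 4 * (W + 1)) with hκ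
  have hκ0 : 0 < κ := by positivity
  obtain ⟨Q, hQ⟩ := exists_polynomial_close hf hr (η := κ ^ p⁻¹) (Real.rpow_pos_of_pos hκ0 _)
  refine ⟨Q, ?_⟩
  have hpt : ∀ z ∈ ball (0 : ℂ) 1, ENNReal.ofReal (‖f z - Q.eval z‖ ^ p * w z)
      ≤ ENNReal.ofReal (2 ^ p) * ENNReal.ofReal (‖f z - f (r * z)‖ ^ p * w z)
        + ENNReal.ofReal (2 ^ p * κ) * ENNReal.ofReal (w z) := by
    intro z hz
    have hwz := hw0 z hz
    have h1 := norm_add_rpow_le hp (f z - f (r * z)) (f (r * z) - Q.eval z)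
    rw [sub_add_sub_cancel] at h1
    have h2 : ‖f (r * z) - Q.eval z‖ ^ p ≤ κ := by
      calc _ ≤ (κ ^ p⁻¹) ^ p := Real.rpow_le_rpow (norm_nonneg _) (hQ z hz).le hp.le
        _ = κ := Real.rpow_inv_rpow hκ0.le hp.ne'
    rw [← ENNReal.ofReal_mul h2p.le, ← ENNReal.ofReal_mul (by positivity),
      ← ENNReal.ofReal_add (by positivity) (by positivity)]
    refine ENNReal.ofReal_le_ofReal ?_
    calc _ ≤ 2 ^ p * (‖f z - f (r * z)‖ ^ p + κ) * w z := by
          refine mul_le_mul_of_nonneg_right (h1.trans ?_) hwz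
          gcongr
      _ = _ := by ring
  have hlint : ∫⁻ z in ball (0 : ℂ) 1, ENNReal.ofReal (‖f z - Q.eval z‖ ^ p * w z)
      ≤ ENNReal.ofReal (ε ^ p / 2) := by
    calc _ ≤ ∫⁻ z in ball (0 : ℂ) 1,
          (ENNReal.ofReal (2 ^ p) * ENNReal.ofReal (‖f z - f (r * z)‖ ^ p * w z)
          + ENNReal.ofReal (2 ^ p * κ) * ENNReal.ofReal (w z)) :=
          setLIntegral_mono' measurableSet_ball hpt
      _ = ENNReal.ofReal (2 ^ p)
            * (∫⁻ z in ball (0 : ℂ) 1, ENNReal.ofReal (‖f z - f (r * z)‖ ^ p * w z))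
          + ENNReal.ofReal (2 ^ p * κ) * ENNReal.ofReal W := by
          rw [lintegral_add_right' _
            ((hwc.aemeasurable measurableSet_ball).ennreal_ofReal.const_mul _),
            lintegral_const_mul' _ _ ENNReal.ofReal_ne_top,
            lintegral_const_mul' _ _ ENNReal.ofReal_ne_top, hWl]
      _ ≤ ENNReal.ofReal (2 ^ p) * ENNReal.ofReal (ε ^ p / (2 ^ p * 4))
          + ENNReal.ofReal (2 ^ p * κ) * ENNReal.ofReal W := by
          gcongr
      _ = ENNReal.ofReal (ε ^ p / 4 + 2 ^ p * κ * W) := by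
          rw [← ENNReal.ofReal_mul h2p.le, ← ENNReal.ofReal_mul (by positivity),
            ← ENNReal.ofReal_add (by positivity) (by positivity)]
          congr 2
          field_simp
      _ ≤ _ := by
          refine ENNReal.ofReal_le_ofReal ?_
          have h3 : 2 ^ p * κ * W ≤ ε ^ p / 4 := by
            have h4 : 2 ^ p * κ * W = ε ^ p / 4 * (W / (W + 1)) := by
              rw [hκ]; field_simp
            rw [h4]
            refine mul_le_of_le_one_right (by positivity) ?_
            rw [div_le_one (by positivity)]
            linarith
          linarith
  have h0 : ∀ z ∈ ball (0 : ℂ) 1, 0 ≤ ‖f z - Q.eval z‖ ^ p * w z := fun z hz =>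
    mul_nonneg (by positivity) (hw0 z hz)
  have h5 : ENNReal.ofReal (∫ z in ball (0 : ℂ) 1, ‖f z - Q.eval z‖ ^ p * w z)
      ≤ ENNReal.ofReal (ε ^ p / 2) := by
    rw [← Real.enorm_of_nonneg (setIntegral_nonneg measurableSet_ball h0)]
    refine (enorm_integral_le_lintegral_enorm _).trans (le_trans (le_of_eq ?_) hlint)
    exact setLIntegral_congr_fun measurableSet_ball fun z hz => Real.enorm_of_nonneg (h0 z hz)
  have h6 := (ENNReal.ofReal_le_ofReal_iff (by positivity)).1 h5
  linarith
end

section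
/- Let w be an angular weight on the unit disk 𝔻, i.e., w(re^{iθ}) = w(θ) depends only on the argument θ ∈ [0, 2π), with ∫₀^{2π} w(θ) dθ < ∞. Then for every 0 < p < ∞, the analytic polynomials are dense in the weighted Bergman space A^p(𝔻, w dA). -/
/-!
An angular weight is invariant under the dilations `z ↦ r z`, and this makes the dilates
`f_r(z) = f(r z)` converge to `f` in the weighted norm as `r → 1⁻`. Indeed, the change of variables
`z ↦ r z` gives `∫ |f_r|^p w ≤ r⁻² ∫ |f|^p w` (`integral_dilate_le`), so the dilates carry
asymptotically no more mass than their pointwise limit `f`. Hence no mass escapes in the limit, and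
`∫ |f - f_r|^p w → 0` by a Scheffé-type argument (`tendsto_integral_sub_dilate`).

Each `f_r` is analytic on a disc larger than the unit disc, so its Taylor polynomials converge to it
uniformly on the unit disc (`exists_polynomial_near_dilate`). Since `w` is integrable on the disc
(`weight_integrableOn`), uniform approximation implies approximation in the weighted norm. The
quasi-triangle inequality `|a - b|^p ≤ 2^p (|a|^p + |b|^p)`, valid for all `p > 0`, combines the two
approximations.
-/

open MeasureTheory Metric Filter
open scoped Topology Real

/-- In polar coordinates the weight becomes the product `r v(θ)`. The polar chart uses angles in
`(-π, π)`, so the periodicity of `v`, which follows from the angular hypothesis, moves its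
integrability there from `[0, 2π]`. -/
lemma weight_integrableOn {w : ℂ → ℝ} {v : ℝ → ℝ}
    (hw_ang : ∀ s θ : ℝ, 0 < s → w ((s : ℂ) * Complex.exp (θ * Complex.I)) = v θ)
    (hv_int : IntervalIntegrable v volume 0 (2 * π)) :
    IntegrableOn w (ball (0 : ℂ) 1) := by
  have hper : Function.Periodic v (2 * π) := by
    intro θ
    rw [← hw_ang 1 θ one_pos, ← hw_ang 1 (θ + 2 * π) one_pos]
    congr 2
    push_cast
    rw [add_mul, Complex.exp_add, Complex.exp_two_pi_mul_I, mul_one]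
  have hv : IntegrableOn v (Set.Ioo (-π) π) := by
    have := (hper.intervalIntegrable₀ (by positivity) hv_int (-π) π).1
    exact this.mono_set Set.Ioo_subset_Ioc_self
  set S : Set (ℝ × ℝ) := Set.Ioo 0 1 ×ˢ Set.Ioo (-π) π with hS
  have hSt : S ⊆ polarCoord.target := Set.prod_mono Set.Ioo_subset_Ioi_self le_rfl
  have hSm : MeasurableSet S := measurableSet_Ioo.prod measurableSet_Ioo
  let W : ℝ × ℝ → ℝ := fun q => w (Complex.measurableEquivRealProd.symm q)
  have hpol : IntegrableOn (fun q : ℝ × ℝ => q.1 * v q.2) S := by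
    rw [IntegrableOn, hS, Measure.volume_eq_prod, ← Measure.prod_restrict]
    refine Integrable.mul_prod (f := fun r : ℝ => r) ?_ hv
    exact (continuous_id.integrableOn_Icc (a := (0 : ℝ)) (b := 1)).mono_set Set.Ioo_subset_Icc_self
  -- The Jacobian of `polarCoord.symm` at `(r, θ)` is `r`.
  have himg : IntegrableOn W (polarCoord.symm '' S) := by
    rw [integrableOn_image_iff_integrableOn_abs_det_fderiv_smul volume hSm
      (fun q _ => (hasFDerivAt_polarCoord_symm q).hasFDerivWithinAt)
      (polarCoord.symm.injOn.mono hSt)]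
    refine hpol.congr_fun (fun q hq => ?_) hSm
    have hq1 : 0 < q.1 := hq.1.1
    simp only [det_fderivPolarCoordSymm, abs_of_pos hq1, smul_eq_mul, W]
    rw [Complex.measurableEquivRealProd_symm_polarCoord_symm_apply,
      Complex.polarCoord_symm_apply, ← hw_ang q.1 q.2 hq1, Complex.exp_mul_I]
    simp
  -- The image of `S` omits from the disc only the slit along the nonpositive real axis, a null set.
  have hpre : IntegrableOn W (Complex.measurableEquivRealProd.symm ⁻¹' ball 0 1) := by
    refine himg.mono_set_ae ?_
    filter_upwards [polarCoord_source_ae_eq_univ] with q hq hqb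
    have hqs : q ∈ polarCoord.source := by
      have : q ∈ Set.univ := trivial
      rwa [← show (q ∈ polarCoord.source) = (q ∈ Set.univ) from hq] at this
    have ht := polarCoord.map_source hqs
    refine ⟨polarCoord q, ⟨⟨ht.1, ?_⟩, ht.2⟩, polarCoord.left_inv hqs⟩
    have h1 : ‖Complex.measurableEquivRealProd.symm q‖ < 1 :=
      mem_ball_zero_iff.1 (show Complex.measurableEquivRealProd.symm q ∈ ball (0 : ℂ) 1 from hqb)
    have h2 : (polarCoord q).1 = ‖Complex.measurableEquivRealProd.symm q‖ := by
      simp [polarCoord, Complex.norm_def, Complex.normSq_apply, pow_two]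
    rw [h2]; exact h1
  exact (Complex.volume_preserving_equiv_real_prod.symm.integrableOn_comp_preimage
    (MeasurableEquiv.measurableEmbedding _)).1 hpre

/-- The polynomial is a Taylor polynomial of `f` at the origin, rescaled by `r`; the power series of
`f` on a disc of radius `R ∈ (r, 1)` converges uniformly on the disc of radius `r`. -/
lemma exists_polynomial_near_dilate {f : ℂ → ℂ} (hf : DifferentiableOn ℂ f (ball (0 : ℂ) 1))
    {r : ℝ} (hr0 : 0 < r) (hr1 : r < 1) {η : ℝ} (hη : 0 < η) :
    ∃ Q : Polynomial ℂ, ∀ z ∈ ball (0 : ℂ) 1, ‖f (r * z) - Q.eval z‖ < η := by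
  lift r to NNReal using hr0.le
  obtain ⟨R, hrR, hR1⟩ := exists_between hr1
  lift R to NNReal using (hr0.trans hrR).le
  have hps := (hf.mono (closedBall_subset_ball hR1)).hasFPowerSeriesOnBall
    (R := R) (c := 0) (by exact_mod_cast hr0.trans hrR)
  have hu := hps.tendstoUniformlyOn (r' := r) (by exact_mod_cast hrR)
  obtain ⟨n, hn⟩ := (Metric.tendstoUniformlyOn_iff.1 hu η hη).exists
  set P := cauchyPowerSeries f 0 R
  refine ⟨∑ k ∈ Finset.range n, Polynomial.C (P.coeff k * (r : ℂ) ^ k) * Polynomial.X ^ k, ?_⟩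
  intro z hz
  have hz' : ((r : ℝ) : ℂ) * z ∈ ball (0 : ℂ) r := by
    have hz1 : ‖z‖ < 1 := by simpa using hz
    have : (r : ℝ) * ‖z‖ < r := by nlinarith
    simpa using this
  have heq : (∑ k ∈ Finset.range n,
      Polynomial.C (P.coeff k * (r : ℂ) ^ k) * Polynomial.X ^ k).eval z
      = P.partialSum n ((r : ℝ) * z) := by
    rw [FormalMultilinearSeries.partialSum, Polynomial.eval_finsetSum]
    refine Finset.sum_congr rfl fun k _ => ?_
    rw [FormalMultilinearSeries.apply_eq_pow_smul_coeff]
    simp [mul_pow]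
    ring
  have := hn _ hz'
  rw [dist_eq_norm, zero_add] at this
  rw [heq]
  exact this

lemma norm_sub_rpow_le {p : ℝ} (hp : 0 < p) (a b : ℂ) :
    ‖a - b‖ ^ p ≤ 2 ^ p * (‖a‖ ^ p + ‖b‖ ^ p) := by
  have h : ‖a - b‖ ≤ 2 * max ‖a‖ ‖b‖ := by
    have := norm_sub_le a b
    have := le_max_left ‖a‖ ‖b‖
    have := le_max_right ‖a‖ ‖b‖
    linarith
  have ha : 0 ≤ ‖a‖ ^ p := by positivity
  have hb : 0 ≤ ‖b‖ ^ p := by positivity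
  calc ‖a - b‖ ^ p ≤ (2 * max ‖a‖ ‖b‖) ^ p := by gcongr
    _ = 2 ^ p * (max ‖a‖ ‖b‖) ^ p := Real.mul_rpow (by norm_num) (by positivity)
    _ ≤ _ := by
      gcongr
      rcases max_choice ‖a‖ ‖b‖ with h | h <;> rw [h] <;> linarith

/-- The origin is excluded because the angular hypothesis says nothing about `w 0`. -/
lemma weight_pos {w : ℂ → ℝ} {v : ℝ → ℝ} (hv_pos : ∀ θ : ℝ, 0 < v θ)
    (hw_ang : ∀ s θ : ℝ, 0 < s → w ((s : ℂ) * Complex.exp (θ * Complex.I)) = v θ)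
    {z : ℂ} (hz : z ≠ 0) : 0 < w z := by
  rw [← Complex.norm_mul_exp_arg_mul_I z, hw_ang _ _ (norm_pos_iff.2 hz)]
  exact hv_pos _

lemma weight_mul {w : ℂ → ℝ} {v : ℝ → ℝ}
    (hw_ang : ∀ s θ : ℝ, 0 < s → w ((s : ℂ) * Complex.exp (θ * Complex.I)) = v θ)
    {r : ℝ} (hr : 0 < r) {z : ℂ} (hz : z ≠ 0) : w (r * z) = w z := by
  have hz' := norm_pos_iff.2 hz
  rw [← Complex.norm_mul_exp_arg_mul_I z, hw_ang _ _ hz', ← mul_assoc, ← Complex.ofReal_mul,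
    hw_ang _ _ (mul_pos hr hz')]

lemma real_mul_mem_ball {r : ℝ} (hr0 : 0 < r) (hr1 : r < 1) {z : ℂ} (hz : z ∈ ball (0 : ℂ) 1) :
    (r : ℂ) * z ∈ ball (0 : ℂ) 1 := by
  rw [mem_ball_zero_iff] at hz ⊢
  rw [norm_mul, Complex.norm_real, Real.norm_of_nonneg hr0.le]
  nlinarith [norm_nonneg z]

/-- Dilating maps the unit disc into itself and preserves the weight, so the left integral is
`r⁻²` times the integral of `|f|^p w` over the disc of radius `r`. -/
lemma integral_dilate_le {p : ℝ} {w : ℂ → ℝ} {v : ℝ → ℝ} (hv_pos : ∀ θ : ℝ, 0 < v θ)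
    (hw_ang : ∀ s θ : ℝ, 0 < s → w ((s : ℂ) * Complex.exp (θ * Complex.I)) = v θ)
    {f : ℂ → ℂ} (hfp : IntegrableOn (fun z => ‖f z‖ ^ p * w z) (ball (0 : ℂ) 1))
    {r : ℝ} (hr0 : 0 < r) (hr1 : r < 1) :
    IntegrableOn (fun z => ‖f (r * z)‖ ^ p * w z) (ball (0 : ℂ) 1) ∧
    ∫ z in ball (0 : ℂ) 1, ‖f (r * z)‖ ^ p * w z
      ≤ (r ^ 2)⁻¹ * ∫ z in ball (0 : ℂ) 1, ‖f z‖ ^ p * w z := by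
  -- Extended by zero, `|f|^p w` is integrable on the plane, where the scaling formula applies.
  set g : ℂ → ℝ := (ball (0 : ℂ) 1).indicator fun z => ‖f z‖ ^ p * w z with hg
  have hgi : Integrable g := hfp.integrable_indicator measurableSet_ball
  have hgr : Integrable fun z => g (r • z) := (integrable_comp_smul_iff volume g hr0.ne').2 hgi
  have h0 : ∀ᵐ z : ℂ, z ≠ 0 := by simp [ae_iff]
  have hg0 : ∀ᵐ z : ℂ, 0 ≤ g (r • z) := by
    filter_upwards [h0] with z hz
    have hz' : (r : ℂ) * z ≠ 0 := mul_ne_zero (by exact_mod_cast hr0.ne') hz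
    have := weight_pos hv_pos hw_ang hz'
    rw [Complex.real_smul]
    exact Set.indicator_apply_nonneg fun _ => by positivity
  have hcongr : ∀ᵐ z ∂volume.restrict (ball (0 : ℂ) 1), g (r • z) = ‖f (r * z)‖ ^ p * w z := by
    filter_upwards [ae_restrict_mem measurableSet_ball, ae_restrict_of_ae h0] with z hz hz0
    rw [Complex.real_smul, hg, Set.indicator_of_mem (real_mul_mem_ball hr0 hr1 hz),
      weight_mul hw_ang hr0 hz0]
  refine ⟨hgr.integrableOn.congr hcongr, ?_⟩
  calc ∫ z in ball (0 : ℂ) 1, ‖f (r * z)‖ ^ p * w z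
      = ∫ z in ball (0 : ℂ) 1, g (r • z) := integral_congr_ae (hcongr.mono fun z h => h.symm)
    _ ≤ ∫ z, g (r • z) := setIntegral_le_integral hgr hg0
    _ = _ := by
      rw [Measure.integral_comp_smul, integral_indicator measurableSet_ball,
        Complex.finrank_real_complex, abs_of_pos (by positivity), smul_eq_mul]

lemma tendsto_dilate {f : ℂ → ℂ} (hf : DifferentiableOn ℂ f (ball (0 : ℂ) 1))
    {z : ℂ} (hz : z ∈ ball (0 : ℂ) 1) :
    Tendsto (fun r : ℝ => f (r * z)) (𝓝[<] 1) (𝓝 (f z)) := by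
  have hc : ContinuousAt f z := hf.continuousOn.continuousAt (isOpen_ball.mem_nhds hz)
  have : Tendsto (fun r : ℝ => (r : ℂ) * z) (𝓝[<] 1) (𝓝 z) := by
    have h : Continuous fun r : ℝ => (r : ℂ) * z := by fun_prop
    simpa using (h.tendsto 1).mono_left nhdsWithin_le_nhds
  exact hc.tendsto.comp this

lemma aestronglyMeasurable_norm_sub_rpow_mul {p : ℝ} (hp : 0 < p) {w : ℂ → ℝ}
    (hw : IntegrableOn w (ball (0 : ℂ) 1)) {f g : ℂ → ℂ}
    (hf : ContinuousOn f (ball (0 : ℂ) 1)) (hg : ContinuousOn g (ball (0 : ℂ) 1)) :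
    AEStronglyMeasurable (fun z => ‖f z - g z‖ ^ p * w z) (volume.restrict (ball (0 : ℂ) 1)) := by
  refine AEStronglyMeasurable.mul ?_ hw.aestronglyMeasurable
  exact ((hf.sub hg).norm.rpow_const fun _ _ => Or.inr hp.le).aestronglyMeasurable
    measurableSet_ball

lemma continuousOn_dilate {f : ℂ → ℂ} (hf : DifferentiableOn ℂ f (ball (0 : ℂ) 1))
    {r : ℝ} (hr0 : 0 < r) (hr1 : r < 1) :
    ContinuousOn (fun z => f (r * z)) (ball (0 : ℂ) 1) :=
  hf.continuousOn.comp (by fun_prop) fun _ hz => real_mul_mem_ball hr0 hr1 hz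

/-- Write `F = |f|^p w`, `F_r = |f_r|^p w`, `G_r = |f - f_r|^p w` and `C = 2^p`. From
`G_r ≤ C (F + F_r)` it follows that `G_r ≤ min (G_r, 2 C F) + C (F_r - min (F_r, F))`. Both minima
are dominated by a fixed integrable function, so the first term has integral tending to `0` and
`∫ min (F_r, F) → ∫ F`; the bound `∫ F_r ≤ r⁻² ∫ F` then makes the second term negligible. -/
lemma tendsto_integral_sub_dilate {p : ℝ} (hp : 0 < p) {w : ℂ → ℝ} {v : ℝ → ℝ}
    (hv_pos : ∀ θ : ℝ, 0 < v θ)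
    (hw_ang : ∀ s θ : ℝ, 0 < s → w ((s : ℂ) * Complex.exp (θ * Complex.I)) = v θ)
    (hw : IntegrableOn w (ball (0 : ℂ) 1))
    {f : ℂ → ℂ} (hf : DifferentiableOn ℂ f (ball (0 : ℂ) 1))
    (hfp : IntegrableOn (fun z => ‖f z‖ ^ p * w z) (ball (0 : ℂ) 1)) :
    Tendsto (fun r : ℝ => ∫ z in ball (0 : ℂ) 1, ‖f z - f (r * z)‖ ^ p * w z) (𝓝[<] 1) (𝓝 0) ∧
    ∀ r : ℝ, 0 < r → r < 1 →
      IntegrableOn (fun z => ‖f z - f (r * z)‖ ^ p * w z) (ball (0 : ℂ) 1) := by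
  set μ := volume.restrict (ball (0 : ℂ) 1) with hμ
  set F : ℂ → ℝ := fun z => ‖f z‖ ^ p * w z with hF
  set Fr : ℝ → ℂ → ℝ := fun r z => ‖f (r * z)‖ ^ p * w z with hFr
  set G : ℝ → ℂ → ℝ := fun r z => ‖f z - f (r * z)‖ ^ p * w z with hG
  set C : ℝ := 2 ^ p with hC
  have hC0 : 0 < C := by positivity
  have hr01 : ∀ᶠ r : ℝ in 𝓝[<] 1, 0 < r ∧ r < 1 := Ioo_mem_nhdsLT one_pos
  have hwpos : ∀ᵐ z ∂μ, 0 < w z := by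
    have h0 : ∀ᵐ z : ℂ, z ≠ 0 := by simp [ae_iff]
    exact (ae_restrict_of_ae h0).mono fun z hz => weight_pos hv_pos hw_ang hz
  have hmem : ∀ᵐ z ∂μ, z ∈ ball (0 : ℂ) 1 := ae_restrict_mem measurableSet_ball
  have hFri : ∀ r : ℝ, 0 < r → r < 1 → Integrable (Fr r) μ := fun r h0 h1 =>
    (integral_dilate_le hv_pos hw_ang hfp h0 h1).1
  have hGm : ∀ r : ℝ, 0 < r → r < 1 → AEStronglyMeasurable (G r) μ := fun r h0 h1 =>
    aestronglyMeasurable_norm_sub_rpow_mul hp hw hf.continuousOn (continuousOn_dilate hf h0 h1)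
  have hGle : ∀ r : ℝ, ∀ᵐ z ∂μ, G r z ≤ C * (F z + Fr r z) := fun r => by
    filter_upwards [hwpos] with z hz
    have := mul_le_mul_of_nonneg_right (norm_sub_rpow_le hp (f z) (f (r * z))) hz.le
    simp only [hG, hF, hFr, hC]
    linarith
  have hG0 : ∀ r : ℝ, ∀ᵐ z ∂μ, 0 ≤ G r z := fun r => by
    filter_upwards [hwpos] with z hz
    simp only [hG]; positivity
  have hF0 : ∀ᵐ z ∂μ, 0 ≤ F z := by
    filter_upwards [hwpos] with z hz
    simp only [hF]; positivity
  have hFr0 : ∀ r : ℝ, ∀ᵐ z ∂μ, 0 ≤ Fr r z := fun r => by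
    filter_upwards [hwpos] with z hz
    simp only [hFr]; positivity
  have hGi : ∀ r : ℝ, 0 < r → r < 1 → Integrable (G r) μ := fun r h0 h1 => by
    refine ((hfp.add (hFri r h0 h1)).const_mul C).mono' (hGm r h0 h1) ?_
    filter_upwards [hGle r, hG0 r] with z h1 h2
    rw [Real.norm_of_nonneg h2]; exact h1
  refine ⟨?_, hGi⟩
  have hK : Integrable (fun z => 2 * C * F z) μ := hfp.const_mul _
  have hT1 : Tendsto (fun r => ∫ z, min (G r z) (2 * C * F z) ∂μ) (𝓝[<] 1) (𝓝 0) := by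
    have := tendsto_integral_filter_of_dominated_convergence (μ := μ) (l := 𝓝[<] (1 : ℝ))
      (F := fun r z => min (G r z) (2 * C * F z)) (f := fun _ => (0 : ℝ)) (fun z => 2 * C * F z)
      (hr01.mono fun r hr => (hGm r hr.1 hr.2).inf hK.aestronglyMeasurable)
      (Eventually.of_forall fun r => ?_) hK ?_
    · simpa using this
    · filter_upwards [hG0 r, hF0] with z h1 h2
      rw [Real.norm_of_nonneg (le_min h1 (by positivity))]
      exact min_le_right _ _
    · filter_upwards [hmem, hF0] with z hz h2
      have h1 : Tendsto (fun r => G r z) (𝓝[<] 1) (𝓝 0) := by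
        have := (((tendsto_dilate hf hz).const_sub (f z)).norm.rpow_const
          (p := p) (Or.inr hp.le)).mul_const (w z)
        simpa [hp.ne'] using this
      have := h1.min (tendsto_const_nhds (x := 2 * C * F z))
      rwa [min_eq_left (by positivity)] at this
  have hT2 : Tendsto (fun r => ∫ z, min (Fr r z) (F z) ∂μ) (𝓝[<] 1) (𝓝 (∫ z, F z ∂μ)) := by
    refine tendsto_integral_filter_of_dominated_convergence (μ := μ) F
      (hr01.mono fun r hr => (hFri r hr.1 hr.2).aestronglyMeasurable.inf hfp.aestronglyMeasurable)
      (Eventually.of_forall fun r => ?_) hfp ?_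
    · filter_upwards [hFr0 r, hF0] with z h1 h2
      rw [Real.norm_of_nonneg (le_min h1 h2)]
      exact min_le_right _ _
    · filter_upwards [hmem] with z hz
      have h1 : Tendsto (fun r => Fr r z) (𝓝[<] 1) (𝓝 (F z)) :=
        ((tendsto_dilate hf hz).norm.rpow_const (p := p) (Or.inr hp.le)).mul_const (w z)
      simpa using h1.min (tendsto_const_nhds (x := F z))
  have hinv : Tendsto (fun r : ℝ => (r ^ 2)⁻¹) (𝓝[<] 1) (𝓝 1) := by
    have : ContinuousAt (fun r : ℝ => (r ^ 2)⁻¹) 1 :=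
      (continuousAt_id.pow 2).inv₀ (by simp)
    simpa using this.tendsto.mono_left nhdsWithin_le_nhds
  have hlim := hT1.add (((hinv.mul_const (∫ z, F z ∂μ)).sub hT2).const_mul C)
  rw [one_mul, sub_self, mul_zero, add_zero] at hlim
  refine tendsto_of_tendsto_of_tendsto_of_le_of_le' tendsto_const_nhds hlim
    (Eventually.of_forall fun r => integral_nonneg_of_ae (hG0 r)) ?_
  filter_upwards [hr01] with r ⟨h0, h1⟩
  have hi1 : Integrable (fun z => min (G r z) (2 * C * F z)) μ := (hGi r h0 h1).inf hK
  have hi2 : Integrable (fun z => min (Fr r z) (F z)) μ := (hFri r h0 h1).inf hfp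
  have hi3 : Integrable (fun z => Fr r z - min (Fr r z) (F z)) μ := (hFri r h0 h1).sub hi2
  calc ∫ z, G r z ∂μ
      ≤ ∫ z, (min (G r z) (2 * C * F z) + C * (Fr r z - min (Fr r z) (F z))) ∂μ := by
        refine integral_mono_ae (hGi r h0 h1) (hi1.add (hi3.const_mul C)) ?_
        filter_upwards [hGle r, hF0] with z h2 h3
        rcases le_total (Fr r z) (F z) with h4 | h4
        · have : C * Fr r z ≤ C * F z := by gcongr
          simp only [min_eq_left h4]
          rw [min_eq_left (by linarith)]
          simp
        · have : C * F z ≤ C * Fr r z := by gcongr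
          simp only [min_eq_right h4]
          rcases min_choice (G r z) (2 * C * F z) with h5 | h5 <;> rw [h5] <;> linarith
    _ = ∫ z, min (G r z) (2 * C * F z) ∂μ
          + C * (∫ z, Fr r z ∂μ - ∫ z, min (Fr r z) (F z) ∂μ) := by
        rw [integral_add hi1 (hi3.const_mul C), integral_const_mul,
          integral_sub (hFri r h0 h1) hi2]
    _ ≤ _ := by
        gcongr
        exact (integral_dilate_le hv_pos hw_ang hfp h0 h1).2

theorem polynomials_dense_angular_weight
    (p : ℝ) (hp : 0 < p)
    (w : ℂ → ℝ) (v : ℝ → ℝ)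
    (hv_pos : ∀ θ : ℝ, 0 < v θ)
    (hw_ang : ∀ s θ : ℝ, 0 < s → w ((s : ℂ) * Complex.exp (θ * Complex.I)) = v θ)
    (hv_int : IntervalIntegrable v MeasureTheory.volume 0 (2 * π))
    (f : ℂ → ℂ) (hf : DifferentiableOn ℂ f (ball (0 : ℂ) 1))
    (hfp : IntegrableOn (fun z => ‖f z‖ ^ p * w z) (ball (0 : ℂ) 1)) :
    ∀ ε : ℝ, 0 < ε → ∃ Q : Polynomial ℂ,
      ∫ z in ball (0 : ℂ) 1, ‖f z - Q.eval z‖ ^ p * w z < ε ^ p := by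
  intro ε hε
  have hw := weight_integrableOn hw_ang hv_int
  obtain ⟨hT, hGi⟩ := tendsto_integral_sub_dilate hp hv_pos hw_ang hw hf hfp
  set I : ℝ := ∫ z in ball (0 : ℂ) 1, w z with hI
  have hwpos : ∀ᵐ z ∂volume.restrict (ball (0 : ℂ) 1), 0 < w z := by
    have h0 : ∀ᵐ z : ℂ, z ≠ 0 := by simp [ae_iff]
    exact (ae_restrict_of_ae h0).mono fun z hz => weight_pos hv_pos hw_ang hz
  have hI0 : 0 ≤ I := integral_nonneg_of_ae (hwpos.mono fun z hz => hz.le)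
  set C : ℝ := 2 ^ p with hC
  have hC0 : 0 < C := by positivity
  -- Each of the two approximation errors is allotted `δ`, so that `C (δ + δ) = ε ^ p`.
  set δ : ℝ := ε ^ p / (2 * C) with hδ
  have hδ0 : 0 < δ := by positivity
  obtain ⟨r, hr, hr0, hr1⟩ :=
    ((hT.eventually_lt_const hδ0).and (Ioo_mem_nhdsLT (one_pos : (0 : ℝ) < 1))).exists
  -- The `+ 1` keeps the denominator positive and makes `η ^ p * I < δ` strict.
  set η : ℝ := (δ / (I + 1)) ^ p⁻¹ with hη
  have hη0 : 0 < η := by positivity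
  have hηp : η ^ p = δ / (I + 1) := Real.rpow_inv_rpow (by positivity) hp.ne'
  obtain ⟨Q, hQ⟩ := exists_polynomial_near_dilate hf hr0 hr1 hη0
  refine ⟨Q, ?_⟩
  have hηI : η ^ p * I < δ := by
    rw [hηp, div_mul_eq_mul_div, div_lt_iff₀ (by positivity)]
    nlinarith
  have hle : ∀ᵐ z ∂volume.restrict (ball (0 : ℂ) 1), ‖f z - Q.eval z‖ ^ p * w z
      ≤ C * (‖f z - f (r * z)‖ ^ p * w z + η ^ p * w z) := by
    filter_upwards [hwpos, ae_restrict_mem measurableSet_ball] with z hz hzb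
    have h1 := norm_sub_rpow_le hp (f z - f (r * z)) (Q.eval z - f (r * z))
    rw [sub_sub_sub_cancel_right, norm_sub_rev (Q.eval z)] at h1
    have h2 : ‖f (r * z) - Q.eval z‖ ^ p ≤ η ^ p := by
      gcongr
      exact (hQ z hzb).le
    rw [← add_mul, ← mul_assoc]
    gcongr
    exact h1.trans (by gcongr)
  have hi := (hGi r hr0 hr1).add (hw.const_mul (η ^ p))
  have hQi : IntegrableOn (fun z => ‖f z - Q.eval z‖ ^ p * w z) (ball (0 : ℂ) 1) := by
    refine (hi.const_mul C).mono'
      (aestronglyMeasurable_norm_sub_rpow_mul hp hw hf.continuousOn Q.continuous.continuousOn) ?_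
    filter_upwards [hwpos, hle] with z hz h
    rw [Real.norm_of_nonneg (by positivity)]; exact h
  calc ∫ z in ball (0 : ℂ) 1, ‖f z - Q.eval z‖ ^ p * w z
      ≤ ∫ z in ball (0 : ℂ) 1, C * (‖f z - f (r * z)‖ ^ p * w z + η ^ p * w z) :=
        integral_mono_ae hQi (hi.const_mul C) hle
    _ = C * ((∫ z in ball (0 : ℂ) 1, ‖f z - f (r * z)‖ ^ p * w z) + η ^ p * I) := by
        rw [integral_const_mul, integral_add (hGi r hr0 hr1) (hw.const_mul _),
          integral_const_mul]
    _ < C * (δ + δ) := by gcongr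
    _ = ε ^ p := by rw [hδ]; field_simp; norm_num
end

section
/- Let 0 < p < ∞ and let w(se^{iθ}) = ω(s)v(θ) be a product weight on the unit disk 𝔻, where ω and v are positive weights satisfying ∫₀¹ s ω(s) ds < ∞ and ∫₀^{2π} v(θ) dθ < ∞. Suppose there exist a constant C > 0 and a non-negative integer k such that r^k · ω(s/r) ≤ C · ω(s) for all 0 ≤ s < r < 1 (r sufficiently close to 1). Then the analytic polynomials are dense in the weighted Bergman space A^p(𝔻, w dA). -/
open MeasureTheory Metric Filter
open scoped Topology Real

/-!
The polynomials approximate `f` through its dilations `f_r(z) = f(rz)`, `r < 1`. Each `f_r` is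
analytic past the closed disk, hence a uniform limit of polynomials on the disk
(`exists_polynomial_approx_dilation`), and `w` is integrable (`weight_integrable`, by polar
coordinates), so it is enough to see that `f_r → f` in `A^p(w)` as `r → 1`.

On a smaller disk `|z| < ρ` the convergence is uniform (`exists_dilation_close`). On the annulus
`ρ ≤ |z| < 1` both `f` and `f_r` have small norm: for `f` this is absolute continuity of the
integral (`exists_small_tail`), and for `f_r` the substitution `u = rz` turns the weight into
`w(u/r) = ω(|u|/r) v(arg u) ≤ (C / r^k) w(u)`, since `u` and `u/r` have the same argument
(`dilation_annulus_bound`). The constants stay bounded as `r → 1`.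
-/

/-! ### The product weight in polar coordinates -/

lemma weight_eq (w : ℂ → ℝ) (ω v : ℝ → ℝ)
    (hw_prod : ∀ s θ : ℝ, 0 < s → w ((s : ℂ) * Complex.exp (θ * Complex.I)) = ω s * v θ)
    {z : ℂ} (hz : z ≠ 0) : w z = ω ‖z‖ * v z.arg := by
  rw [← hw_prod _ _ (norm_pos_iff.2 hz), Complex.norm_mul_exp_arg_mul_I]

/-- Since `w` is a function on the plane, its angular factor is automatically `2π`-periodic; this
moves the integrability of `v` from `(0, 2π)` to the range `(-π, π)` of `Complex.arg`. -/
lemma angular_periodic (w : ℂ → ℝ) (ω v : ℝ → ℝ)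
    (hω_pos : ∀ s : ℝ, 0 < s → s < 1 → 0 < ω s)
    (hw_prod : ∀ s θ : ℝ, 0 < s → w ((s : ℂ) * Complex.exp (θ * Complex.I)) = ω s * v θ) :
    Function.Periodic v (2 * π) := by
  intro θ
  have h0 := hω_pos (1 / 2) (by norm_num) (by norm_num)
  have h1 := hw_prod (1 / 2) (θ + 2 * π) (by norm_num)
  have h2 := hw_prod (1 / 2) θ (by norm_num)
  have h3 : Complex.exp (((θ + 2 * π : ℝ) : ℂ) * Complex.I) = Complex.exp (θ * Complex.I) := by
    push_cast
    rw [add_mul, Complex.exp_periodic]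
  rw [h3, h2] at h1
  exact (mul_left_cancel₀ h0.ne' h1).symm

lemma weight_integrable (w : ℂ → ℝ) (ω v : ℝ → ℝ)
    (hω_pos : ∀ s : ℝ, 0 < s → s < 1 → 0 < ω s)
    (hw_prod : ∀ s θ : ℝ, 0 < s → w ((s : ℂ) * Complex.exp (θ * Complex.I)) = ω s * v θ)
    (hω_int : IntervalIntegrable (fun s : ℝ => s * ω s) volume 0 1)
    (hv_int : IntervalIntegrable v volume 0 (2 * π)) :
    IntegrableOn w (ball (0 : ℂ) 1) := by
  have hv : IntegrableOn v (Set.Ioo (-π) π) := by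
    have := (angular_periodic w ω v hω_pos hw_prod).intervalIntegrable₀
      (by positivity) hv_int (-π) π
    exact ((intervalIntegrable_iff_integrableOn_Ioo_of_le (by linarith [Real.pi_pos])).1 this)
  have hω : IntegrableOn (fun s : ℝ => s * ω s) (Set.Ioo 0 1) :=
    (intervalIntegrable_iff_integrableOn_Ioo_of_le zero_le_one).1 hω_int
  set S : Set (ℝ × ℝ) := Set.Ioo 0 1 ×ˢ Set.Ioo (-π) π with hS
  have hSm : MeasurableSet S := measurableSet_Ioo.prod measurableSet_Ioo
  have hST : S ⊆ polarCoord.target := Set.prod_mono (fun x hx => hx.1) le_rfl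
  have hprod : IntegrableOn (fun q : ℝ × ℝ => (q.1 * ω q.1) * v q.2) S := by
    have := Integrable.mul_prod hω hv
    rwa [Measure.prod_restrict] at this
  have himg : IntegrableOn (w ∘ Complex.measurableEquivRealProd.symm) (polarCoord.symm '' S) := by
    rw [integrableOn_image_iff_integrableOn_abs_det_fderiv_smul volume hSm
      (fun q _ => (hasFDerivAt_polarCoord_symm q).hasFDerivWithinAt)
      (polarCoord.symm.injOn.mono hST)]
    refine hprod.congr_fun (fun q hq => ?_) hSm
    have hq1 : 0 < q.1 := hq.1.1
    have : Complex.measurableEquivRealProd.symm (polarCoord.symm q)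
        = (q.1 : ℂ) * Complex.exp (q.2 * Complex.I) := by
      rw [Complex.measurableEquivRealProd_symm_polarCoord_symm_apply,
        Complex.polarCoord_symm_apply, Complex.exp_mul_I]
      push_cast
      rfl
    simp only [Function.comp_apply, this, hw_prod _ _ hq1, det_fderivPolarCoordSymm, smul_eq_mul,
      abs_of_pos hq1, mul_assoc]
  rw [← (Complex.volume_preserving_equiv_real_prod.symm).integrableOn_comp_preimage
    Complex.measurableEquivRealProd.symm.measurableEmbedding]
  -- Polar coordinates miss the closed negative half-line, which is a null set.
  refine himg.mono_set_ae ?_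
  filter_upwards [polarCoord_source_ae_eq_univ] with q hq hqb
  have hqs : q ∈ polarCoord.source := by
    rw [show (q ∈ polarCoord.source) = True from hq.trans (eq_true trivial)]
    trivial
  refine ⟨polarCoord q, ⟨⟨(polarCoord.map_source hqs).1, ?_⟩, (polarCoord.map_source hqs).2⟩,
    polarCoord.left_inv hqs⟩
  have h1 : ‖Complex.measurableEquivRealProd.symm q‖ < 1 := mem_ball_zero_iff.1 hqb
  have h2 := Complex.polarCoord_apply (Complex.measurableEquivRealProd.symm q)
  have h3 : polarCoord q = Complex.polarCoord (Complex.measurableEquivRealProd.symm q) := rfl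
  rw [h3, h2]
  exact h1

/-! ### Dilations of an analytic function -/

/-- Dilations are uniform limits of polynomials on the disk: the Taylor polynomials of `f` converge
uniformly on `|z| < r`. -/
lemma exists_polynomial_approx_dilation {f : ℂ → ℂ} (hf : DifferentiableOn ℂ f (ball (0 : ℂ) 1))
    {r δ : ℝ} (hr0 : 0 < r) (hr : r < 1) (hδ : 0 < δ) :
    ∃ Q : Polynomial ℂ, ∀ z ∈ ball (0 : ℂ) 1, ‖f (r * z) - Q.eval z‖ < δ := by
  obtain ⟨R, hrR, hR⟩ := exists_between hr
  lift R to NNReal using (hr0.trans hrR).le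
  lift r to NNReal using hr0.le
  have hps := (hf.mono (closedBall_subset_ball hR)).hasFPowerSeriesOnBall
    (by exact_mod_cast hr0.trans hrR)
  have hu := hps.tendstoUniformlyOn' (r' := r) (by exact_mod_cast hrR)
  rw [Metric.tendstoUniformlyOn_iff] at hu
  obtain ⟨n, hn⟩ := (hu δ hδ).exists
  refine ⟨∑ j ∈ Finset.range n, Polynomial.C ((r : ℂ) ^ j *
    (cauchyPowerSeries f 0 R).coeff j) * Polynomial.X ^ j, fun z hz => ?_⟩
  have hz' : (r : ℂ) * z ∈ ball (0 : ℂ) r := by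
    simp only [mem_ball_zero_iff, norm_mul] at hz ⊢
    simpa using mul_lt_of_lt_one_right hr0 hz
  have := hn _ hz'
  rw [dist_eq_norm, sub_zero] at this
  suffices hQ : Polynomial.eval z (∑ j ∈ Finset.range n, Polynomial.C ((r : ℂ) ^ j *
      (cauchyPowerSeries f 0 R).coeff j) * Polynomial.X ^ j) =
      (cauchyPowerSeries f 0 R).partialSum n (r * z) by
    rw [hQ]
    exact this
  simp only [FormalMultilinearSeries.partialSum, Polynomial.eval_finsetSum]
  refine Finset.sum_congr rfl fun j _ => ?_
  rw [FormalMultilinearSeries.apply_eq_pow_smul_coeff]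
  simp only [Polynomial.eval_mul, Polynomial.eval_C, Polynomial.eval_pow, Polynomial.eval_X,
    smul_eq_mul, mul_pow]
  ring

open scoped Pointwise in
/-- The growth condition on `ω` controls the norm of a dilation near the unit circle by that of `f`. -/
lemma dilation_annulus_bound {p : ℝ} {w : ℂ → ℝ} {ω v : ℝ → ℝ}
    (hω_pos : ∀ s : ℝ, 0 < s → s < 1 → 0 < ω s) (hv_pos : ∀ θ : ℝ, 0 < v θ)
    (hw_prod : ∀ s θ : ℝ, 0 < s → w ((s : ℂ) * Complex.exp (θ * Complex.I)) = ω s * v θ)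
    {C : ℝ} {k : ℕ} {r : ℝ} (hr0 : 0 < r) (hr : r < 1)
    (hgrow : ∀ s : ℝ, 0 ≤ s → s < r → r ^ k * ω (s / r) ≤ C * ω s)
    {f : ℂ → ℂ} (hfp : IntegrableOn (fun z => ‖f z‖ ^ p * w z) (ball (0 : ℂ) 1))
    {ρ₀ ρ : ℝ} (hρ₀ : 0 < ρ₀) (hρ : ρ₀ ≤ r * ρ) (hC : 0 < C) :
    ∫ z in ball (0 : ℂ) 1 \ ball 0 ρ, ‖f (r * z)‖ ^ p * w z ≤
      (r ^ 2)⁻¹ * (C / r ^ k * ∫ z in ball (0 : ℂ) 1 \ ball 0 ρ₀, ‖f z‖ ^ p * w z) := by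
  have hm : ∀ t : ℝ, MeasurableSet (ball (0 : ℂ) 1 \ ball 0 t) := fun t =>
    measurableSet_ball.diff measurableSet_ball
  have hwpos : ∀ z : ℂ, z ≠ 0 → ‖z‖ < 1 → 0 < w z := fun z hz hz1 => by
    rw [weight_eq w ω v hw_prod hz]
    exact mul_pos (hω_pos _ (norm_pos_iff.2 hz) hz1) (hv_pos _)
  have hint : IntegrableOn (fun z => C / r ^ k * (‖f z‖ ^ p * w z)) (ball (0 : ℂ) 1 \ ball 0 ρ₀) :=
    (hfp.mono_set Set.sdiff_subset).const_mul _
  have hsub : r • (ball (0 : ℂ) 1 \ ball 0 ρ) ⊆ ball (0 : ℂ) 1 \ ball 0 ρ₀ := by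
    rintro _ ⟨z, ⟨hz1, hz2⟩, rfl⟩
    simp only [mem_ball_zero_iff, not_lt, Set.mem_sdiff, norm_smul, Real.norm_eq_abs,
      abs_of_pos hr0] at hz1 hz2 ⊢
    exact ⟨by nlinarith [norm_nonneg z], hρ.trans (by gcongr)⟩
  have hmem : ∀ z ∈ r • (ball (0 : ℂ) 1 \ ball 0 ρ), z ≠ 0 ∧ ‖z‖ < r := by
    intro z hz
    refine ⟨fun h => ?_, ?_⟩
    · have := (hsub hz).2
      simp [h, hρ₀] at this
    · obtain ⟨y, hy, rfl⟩ := hz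
      have := mem_ball_zero_iff.1 hy.1
      simp only [norm_smul, Real.norm_eq_abs, abs_of_pos hr0]
      nlinarith
  have hmr : MeasurableSet (r • (ball (0 : ℂ) 1 \ ball 0 ρ)) := (hm ρ).const_smul₀ r
  have hne : (r : ℂ) ≠ 0 := by exact_mod_cast hr0.ne'
  have hform : ∀ z ∈ r • (ball (0 : ℂ) 1 \ ball 0 ρ),
      w ((r : ℂ)⁻¹ * z) = ω (‖z‖ / r) * v z.arg := by
    intro z hz
    rw [weight_eq w ω v hw_prod (mul_ne_zero (inv_ne_zero hne) (hmem z hz).1), norm_mul,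
      ← Complex.ofReal_inv, Complex.arg_real_mul _ (inv_pos.2 hr0), Complex.norm_of_nonneg
      (inv_pos.2 hr0).le, div_eq_inv_mul]
  have hcv := Measure.setIntegral_comp_smul_of_pos volume
    (fun u : ℂ => ‖f u‖ ^ p * w ((r : ℂ)⁻¹ * u)) (ball (0 : ℂ) 1 \ ball 0 ρ) hr0
  simp only [Complex.real_smul, inv_mul_cancel_left₀ hne, Complex.finrank_real_complex,
    smul_eq_mul] at hcv
  rw [hcv]
  gcongr
  rw [← integral_const_mul]
  calc _ ≤ ∫ z in r • (ball (0 : ℂ) 1 \ ball 0 ρ), C / r ^ k * (‖f z‖ ^ p * w z) := by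
        refine integral_mono_of_nonneg ?_ (hint.mono_set hsub) ?_
        · filter_upwards [ae_restrict_mem hmr] with z hz
          have h := hmem z hz
          simp only [hform z hz, Pi.zero_apply]
          have := hω_pos (‖z‖ / r) (div_pos (norm_pos_iff.2 h.1) hr0) ((div_lt_one hr0).2 h.2)
          have := hv_pos z.arg
          positivity
        · filter_upwards [ae_restrict_mem hmr] with z hz
          have h := hmem z hz
          simp only [hform z hz]
          rw [weight_eq w ω v hw_prod h.1]
          have hg : ω (‖z‖ / r) ≤ C / r ^ k * ω ‖z‖ := by
            rw [div_mul_eq_mul_div, le_div_iff₀ (by positivity), mul_comm]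
            exact hgrow _ (norm_nonneg z) h.2
          have := hv_pos z.arg
          calc ‖f z‖ ^ p * (ω (‖z‖ / r) * v z.arg)
              ≤ ‖f z‖ ^ p * ((C / r ^ k * ω ‖z‖) * v z.arg) := by gcongr
            _ = _ := by ring
    _ ≤ _ := by
        refine setIntegral_mono_set hint ?_ hsub.eventuallyLE
        filter_upwards [ae_restrict_mem (hm ρ₀)] with z hz
        have hz0 : z ≠ 0 := fun h => by
          have := hz.2
          simp [h, hρ₀] at this
        have := hwpos z hz0 (mem_ball_zero_iff.1 hz.1)
        simp only [Pi.zero_apply]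
        positivity

lemma exists_small_tail {g : ℂ → ℝ} (hg : IntegrableOn g (ball (0 : ℂ) 1)) {η : ℝ} (hη : 0 < η) :
    ∃ ρ : ℝ, 0 < ρ ∧ ρ < 1 ∧ ∫ z in ball (0 : ℂ) 1 \ ball 0 ρ, g z < η := by
  have ht := tendsto_setIntegral_of_antitone (μ := volume) (f := g)
    (s := fun n : ℕ => ball (0 : ℂ) 1 \ ball 0 (1 - 1 / ((n : ℝ) + 1)))
    (fun n => measurableSet_ball.diff measurableSet_ball)
    (fun m n hmn => Set.sdiff_subset_sdiff_right (ball_subset_ball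
      (sub_le_sub_left (one_div_le_one_div_of_le (by positivity) (by gcongr)) 1)))
    ⟨0, hg.mono_set Set.sdiff_subset⟩
  have hempty : ⋂ n : ℕ, (ball (0 : ℂ) 1 \ ball 0 (1 - 1 / ((n : ℝ) + 1))) = ∅ := by
    refine Set.eq_empty_of_forall_notMem fun z hz => ?_
    rw [Set.mem_iInter] at hz
    obtain ⟨n, hn⟩ := exists_nat_one_div_lt (sub_pos.2 (mem_ball_zero_iff.1 (hz 0).1))
    exact (hz n).2 (mem_ball_zero_iff.2 (by linarith))
  rw [hempty, setIntegral_empty] at ht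
  obtain ⟨n, hn, hn1⟩ := ((ht.eventually (gt_mem_nhds hη)).and (eventually_ge_atTop 1)).exists
  have hn' : (1 : ℝ) ≤ n := by exact_mod_cast hn1
  refine ⟨_, ?_, ?_, hn⟩
  · rw [sub_pos, div_lt_one (by positivity)]
    linarith
  · have : (0 : ℝ) < 1 / ((n : ℝ) + 1) := by positivity
    linarith

lemma exists_dilation_close {f : ℂ → ℂ} (hf : DifferentiableOn ℂ f (ball (0 : ℂ) 1))
    {ρ δ : ℝ} (hρ : ρ < 1) (hδ : 0 < δ) :
    ∃ d > 0, ∀ r : ℝ, 0 < r → r < 1 → 1 - d < r →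
      ∀ z ∈ ball (0 : ℂ) ρ, ‖f z - f (r * z)‖ < δ := by
  have hu := (isCompact_closedBall (0 : ℂ) ρ).uniformContinuousOn_of_continuous
    (hf.continuousOn.mono (closedBall_subset_ball hρ))
  obtain ⟨d, hd, h⟩ := Metric.uniformContinuousOn_iff.1 hu δ hδ
  refine ⟨d, hd, fun r hr0 hr hrd z hz => ?_⟩
  have hz' := mem_ball_zero_iff.1 hz
  rw [← dist_eq_norm]
  refine h _ (mem_closedBall_zero_iff.2 hz'.le) _ (mem_closedBall_zero_iff.2 ?_) ?_
  · rw [norm_mul, Complex.norm_of_nonneg hr0.le]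
    nlinarith [norm_nonneg z]
  · have : z - r * z = ((1 - r : ℝ) : ℂ) * z := by push_cast; ring
    rw [dist_eq_norm, this, norm_mul, Complex.norm_of_nonneg (by linarith)]
    nlinarith [norm_nonneg z]

/-! ### Density of the polynomials -/

lemma rpow_add_three_le {p a b c : ℝ} (hp : 0 < p) (ha : 0 ≤ a) (hb : 0 ≤ b) (hc : 0 ≤ c) :
    (a + b + c) ^ p ≤ 3 ^ p * (a ^ p + b ^ p + c ^ p) := by
  have hm : 0 ≤ max a (max b c) := ha.trans (le_max_left _ _)
  calc (a + b + c) ^ p ≤ (3 * max a (max b c)) ^ p := by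
        gcongr
        have := le_max_left a (max b c)
        have := (le_max_left b c).trans (le_max_right a _)
        have := (le_max_right b c).trans (le_max_right a _)
        linarith
    _ = 3 ^ p * (max a (max b c)) ^ p := Real.mul_rpow (by norm_num) hm
    _ ≤ _ := by
        gcongr
        have := Real.rpow_nonneg ha p
        have := Real.rpow_nonneg hb p
        have := Real.rpow_nonneg hc p
        rcases max_choice a (max b c) with h | h <;> rw [h]
        · linarith
        · rcases max_choice b c with h | h <;> rw [h] <;> linarith

/-- For a product weight `w(se^{iθ}) = ω(s)v(θ)` with `∫₀¹ sω(s) ds < ∞`,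
`∫₀^{2π} v(θ) dθ < ∞`, and `r^k ω(s/r) ≤ C ω(s)` for `0 ≤ s < r < 1` with `r` close to `1`,
the analytic polynomials are dense in `A^p(𝔻, w dA)`. -/
theorem polynomials_dense_product_weight
    (p : ℝ) (hp : 0 < p)
    (w : ℂ → ℝ) (ω : ℝ → ℝ) (v : ℝ → ℝ)
    (hω_pos : ∀ s : ℝ, 0 < s → s < 1 → 0 < ω s)
    (hv_pos : ∀ θ : ℝ, 0 < v θ)
    (hw_prod : ∀ s θ : ℝ, 0 < s → w ((s : ℂ) * Complex.exp (θ * Complex.I)) = ω s * v θ)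
    (hω_int : IntervalIntegrable (fun s : ℝ => s * ω s) MeasureTheory.volume 0 1)
    (hv_int : IntervalIntegrable v MeasureTheory.volume 0 (2 * π))
    (C : ℝ) (hC : 0 < C) (k : ℕ) (r₀ : ℝ) (hr₀ : r₀ ∈ Set.Ioo (0 : ℝ) 1)
    (hgrow : ∀ r : ℝ, r₀ ≤ r → r < 1 → ∀ s : ℝ, 0 ≤ s → s < r →
      r ^ k * ω (s / r) ≤ C * ω s)
    (f : ℂ → ℂ) (hf : DifferentiableOn ℂ f (ball (0 : ℂ) 1))
    (hfp : IntegrableOn (fun z => ‖f z‖ ^ p * w z) (ball (0 : ℂ) 1)) :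
    ∀ ε : ℝ, 0 < ε → ∃ Q : Polynomial ℂ,
      ∫ z in ball (0 : ℂ) 1, ‖f z - Q.eval z‖ ^ p * w z < ε ^ p := by
  intro ε hε
  have hwint := weight_integrable w ω v hω_pos hw_prod hω_int hv_int
  have hwpos : ∀ z : ℂ, z ≠ 0 → ‖z‖ < 1 → 0 < w z := fun z hz hz1 => by
    rw [weight_eq w ω v hw_prod hz]
    exact mul_pos (hω_pos _ (norm_pos_iff.2 hz) hz1) (hv_pos _)
  -- Nothing is assumed about `w 0`, so positivity of `w` holds only off the origin.
  have hae : ∀ᵐ z ∂(volume.restrict (ball (0 : ℂ) 1)), ‖z‖ < 1 ∧ 0 < w z := by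
    filter_upwards [ae_restrict_mem measurableSet_ball,
      ae_restrict_of_ae (Measure.ae_ne volume (0 : ℂ))] with z hz hz0
    exact ⟨mem_ball_zero_iff.1 hz, hwpos z hz0 (mem_ball_zero_iff.1 hz)⟩
  set W : ℝ := ∫ z in ball (0 : ℂ) 1, w z with hW
  have hW0 : 0 ≤ W := integral_nonneg_of_ae (hae.mono fun z hz => hz.2.le)
  obtain ⟨hr₀0, hr₀1⟩ := hr₀
  -- `B` dominates, for every `r > r₀`, the constant of `dilation_annulus_bound`.
  set B : ℝ := (r₀ ^ 2)⁻¹ * (C / r₀ ^ k) with hB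
  have hB0 : 0 < B := by positivity
  have hεp : 0 < ε ^ p := Real.rpow_pos_of_pos hε p
  have h3p : (0 : ℝ) < 3 ^ p := by positivity
  -- `η` and `e = δ ^ p` are chosen so that `3 ^ p * (e * (W + 1) + (1 + B) * η) = ε ^ p`.
  set η : ℝ := ε ^ p / (3 ^ p * (2 * (1 + B))) with hη
  have hη0 : 0 < η := by positivity
  set e : ℝ := ε ^ p / (3 ^ p * (2 * (W + 1))) with he
  have he0 : 0 < e := by positivity
  set δ : ℝ := e ^ p⁻¹ with hδ
  have hδ0 : 0 < δ := Real.rpow_pos_of_pos he0 _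
  have hδp : δ ^ p = e := Real.rpow_inv_rpow he0.le hp.ne'
  obtain ⟨ρ₀, hρ₀0, hρ₀1, htail⟩ := exists_small_tail hfp hη0
  obtain ⟨ρ, hρ₀ρ, hρ1⟩ := exists_between hρ₀1
  have hρ0 : 0 < ρ := hρ₀0.trans hρ₀ρ
  obtain ⟨d, hd0, hd⟩ := exists_dilation_close hf hρ1 hδ0
  -- `r > ρ₀ / ρ` makes `z ↦ r z` carry `ρ ≤ |z| < 1` into `ρ₀ ≤ |z| < 1`, where the tail is small.
  obtain ⟨r, hrmax, hr1⟩ := exists_between (show max r₀ (max (1 - d) (ρ₀ / ρ)) < 1 from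
    max_lt hr₀1 (max_lt (by linarith) ((div_lt_one hρ0).2 hρ₀ρ)))
  have hrr₀ : r₀ < r := (le_max_left _ _).trans_lt hrmax
  have hrd : 1 - d < r := ((le_max_left _ _).trans (le_max_right _ _)).trans_lt hrmax
  have hrρ : ρ₀ / ρ < r := ((le_max_right _ _).trans (le_max_right _ _)).trans_lt hrmax
  have hr0 : 0 < r := hr₀0.trans hrr₀
  obtain ⟨Q, hQ⟩ := exists_polynomial_approx_dilation hf hr0 hr1 hδ0
  refine ⟨Q, ?_⟩
  set A : Set ℂ := ball (0 : ℂ) 1 \ ball 0 ρ with hA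
  have hAm : MeasurableSet A := measurableSet_ball.diff measurableSet_ball
  have hAsub : A ⊆ ball (0 : ℂ) 1 := Set.sdiff_subset
  have hfA : ∫ z in A, ‖f z‖ ^ p * w z ≤ η := by
    refine (setIntegral_mono_set (hfp.mono_set Set.sdiff_subset) ?_ ?_).trans htail.le
    · refine (ae_restrict_of_ae_restrict_of_subset Set.sdiff_subset hae).mono fun z hz => ?_
      have := hz.2
      simp only [Pi.zero_apply]
      positivity
    · exact (Set.sdiff_subset_sdiff_right (ball_subset_ball hρ₀ρ.le)).eventuallyLE
  have hfrA : ∫ z in A, ‖f (r * z)‖ ^ p * w z ≤ B * η := by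
    refine (dilation_annulus_bound hω_pos hv_pos hw_prod hr0 hr1 (hgrow r hrr₀.le hr1) hfp hρ₀0
      ((div_lt_iff₀ hρ0).1 hrρ).le hC).trans ?_
    rw [hB, mul_assoc]
    have htail0 : 0 ≤ ∫ z in ball (0 : ℂ) 1 \ ball 0 ρ₀, ‖f z‖ ^ p * w z := by
      refine integral_nonneg_of_ae ?_
      refine (ae_restrict_of_ae_restrict_of_subset Set.sdiff_subset hae).mono fun z hz => ?_
      have := hz.2
      simp only [Pi.zero_apply]
      positivity
    gcongr
  have hfr_int : IntegrableOn (fun z => ‖f (r * z)‖ ^ p * w z) (ball (0 : ℂ) 1) := by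
    have hmaps : Set.MapsTo (fun z : ℂ => (r : ℂ) * z) (closedBall 0 1) (ball 0 1) := by
      intro z hz
      have := mem_closedBall_zero_iff.1 hz
      rw [mem_ball_zero_iff, norm_mul, Complex.norm_of_nonneg hr0.le]
      nlinarith
    have hcont : ContinuousOn (fun z : ℂ => ‖f (r * z)‖ ^ p) (closedBall 0 1) :=
      ((hf.continuousOn.comp (by fun_prop) hmaps).norm).rpow_const fun _ _ => Or.inr hp.le
    exact IntegrableOn.continuousOn_mul_of_subset hcont hwint (isCompact_closedBall _ _)
      measurableSet_ball ball_subset_closedBall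
  have hI1 : IntegrableOn (fun z => δ ^ p * w z) (ball (0 : ℂ) 1) := hwint.const_mul _
  have hI2 : IntegrableOn (A.indicator fun z => ‖f z‖ ^ p * w z) (ball (0 : ℂ) 1) :=
    hfp.indicator hAm
  have hI3 : IntegrableOn (A.indicator fun z => ‖f (r * z)‖ ^ p * w z) (ball (0 : ℂ) 1) :=
    hfr_int.indicator hAm
  have hI12 : IntegrableOn (fun z => δ ^ p * w z + A.indicator (fun z => ‖f z‖ ^ p * w z) z)
      (ball (0 : ℂ) 1) := hI1.add hI2
  have hbound : ∫ z in ball (0 : ℂ) 1, ‖f z - Q.eval z‖ ^ p * w z ≤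
      ∫ z in ball (0 : ℂ) 1, 3 ^ p * (δ ^ p * w z + A.indicator (fun z => ‖f z‖ ^ p * w z) z
        + A.indicator (fun z => ‖f (r * z)‖ ^ p * w z) z) := by
    refine integral_mono_of_nonneg ?_ ((hI12.add hI3).const_mul _) ?_
    · refine hae.mono fun z hz => ?_
      have := hz.2
      simp only [Pi.zero_apply]
      positivity
    · refine hae.mono fun z ⟨hz1, hwz⟩ => ?_
      have hzQ := (hQ z (mem_ball_zero_iff.2 hz1)).le
      by_cases hzρ : z ∈ ball (0 : ℂ) ρ
      · have hzA : z ∉ A := fun h => h.2 hzρ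
        have hzd := (hd r hr0 hr1 hrd z hzρ).le
        simp only [Set.indicator_of_notMem hzA, add_zero]
        rw [← mul_assoc, ← Real.mul_rpow (by norm_num) hδ0.le]
        gcongr
        calc ‖f z - Q.eval z‖ ≤ ‖f z - f (r * z)‖ + ‖f (r * z) - Q.eval z‖ :=
              norm_sub_le_norm_sub_add_norm_sub _ _ _
          _ ≤ 3 * δ := by linarith
      · have hzA : z ∈ A := ⟨mem_ball_zero_iff.2 hz1, hzρ⟩
        simp only [Set.indicator_of_mem hzA]
        have h1 : ‖f z - Q.eval z‖ ≤ δ + ‖f z‖ + ‖f (r * z)‖ := by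
          calc ‖f z - Q.eval z‖ ≤ ‖f z - f (r * z)‖ + ‖f (r * z) - Q.eval z‖ :=
                norm_sub_le_norm_sub_add_norm_sub _ _ _
            _ ≤ (‖f z‖ + ‖f (r * z)‖) + δ := add_le_add (norm_sub_le _ _) hzQ
            _ = _ := by ring
        calc ‖f z - Q.eval z‖ ^ p * w z ≤ (δ + ‖f z‖ + ‖f (r * z)‖) ^ p * w z := by gcongr
          _ ≤ (3 ^ p * (δ ^ p + ‖f z‖ ^ p + ‖f (r * z)‖ ^ p)) * w z := by
              gcongr
              exact rpow_add_three_le hp hδ0.le (norm_nonneg _) (norm_nonneg _)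
          _ = _ := by ring
  refine hbound.trans_lt ?_
  rw [integral_const_mul, integral_add hI12 hI3, integral_add hI1 hI2,
    integral_const_mul, setIntegral_indicator hAm, setIntegral_indicator hAm,
    Set.inter_eq_right.2 hAsub, hδp, ← hW]
  calc 3 ^ p * (e * W + (∫ z in A, ‖f z‖ ^ p * w z) + ∫ z in A, ‖f (r * z)‖ ^ p * w z)
      ≤ 3 ^ p * (e * W + η + B * η) := by gcongr
    _ < 3 ^ p * (e * (W + 1) + (1 + B) * η) := by
        gcongr ?_ * ?_
        nlinarith
    _ = ε ^ p := by
        rw [he, hη]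
        field_simp
        norm_num
end
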